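/- arXiv:2007.14377 — 4 statements merged into one kernel-verified Lean document; each statement's English description precedes it below -/
import Mathlib

section
/- Let G be a graph and let δ be a nonnegative half-integer (i.e., 2δ is a nonnegative integer) such that G is δ-hyperbolic. If every family of pairwise intersecting disks of G, each having radius at most δ+1 (i.e., each radius r satisfies 2r ≤ 2δ+2), has a common vertex, then G is a Helly graph. -/
open SimpleGraph

/-- A graph is Helly if every family of pairwise intersecting disks has a common vertex. -/
def HellyGraph {V : Type*} (G : SimpleGraph V) : Prop :=
  ∀ (S : Set V) (r : V → ℕ),
    (∀ u ∈ S, ∀ v ∈ S, ∃ w, G.dist u w ≤ r u ∧ G.dist v w ≤ r v) →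
    ∃ c, ∀ v ∈ S, G.dist v c ≤ r v

/-!
Let `J = ⌊δ⌋ + 1`, so that disks of radius at most `J` have the Helly property.

Hyperbolicity yields a common vertex of pairwise intersecting disks `D(v, k)`, `D(x, J)`, `D(y, J)`,
by induction on `k`. Move `x` and `y` one step towards `v`. If the two disks of radius `J` still
meet, the induction hypothesis gives a vertex that is off by one and can be corrected inside disks
of radius at most `J`. Otherwise the four-point condition forces a vertex `z` of
`D(x, J) ∩ D(y, J)` to be close to `v`; apply the induction hypothesis to `x` and `z`, to `y` and
`z`, and to the two resulting vertices.

A correction by one turns this property for `J` into the same property for `J - 1`, and eventually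
for radius `1`. Together with the Helly property of unit disks it implies that `G` is Helly: if `c`
lies in all the disks enlarged by one, then each disk `D(u, r u)` has a gate `g u`, a vertex of
`D(u, r u - 1)` adjacent or equal to all of `D(c, 1) ∩ D(u, r u)`. The unit disks around the gates
pairwise intersect, and their common vertex lies in all the original disks.
-/

section

variable {V : Type*} {G : SimpleGraph V}

theorem disks_intersect_iff (hG : G.Connected) {x y : V} {a b : ℕ} :
    (∃ z, G.dist x z ≤ a ∧ G.dist y z ≤ b) ↔ G.dist x y ≤ a + b := by
  constructor
  · rintro ⟨z, hx, hy⟩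
    calc G.dist x y ≤ G.dist x z + G.dist z y := hG.dist_triangle
      _ ≤ a + b := by rw [G.dist_comm (u := z)]; gcongr
  · intro h
    obtain ⟨p, hp⟩ := hG.exists_walk_length_eq_dist x y
    refine ⟨p.getVert a, (dist_le (p.take a)).trans ?_, ?_⟩
    · rw [Walk.take_length]
      omega
    · rw [dist_comm]
      refine (dist_le (p.drop a)).trans ?_
      rw [Walk.drop_length]
      omega

/-- The Helly property for the disks of radius at most `J`. A family of disks is a set of pairs
(center, radius), so that concentric disks are allowed, and two disks of a connected graph
intersect exactly when the distance of their centers is at most the sum of their radii. -/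
def LocallyHelly (G : SimpleGraph V) (J : ℕ) : Prop :=
  ∀ T : Set (V × ℕ), (∀ p ∈ T, p.2 ≤ J) →
    (∀ p ∈ T, ∀ q ∈ T, G.dist p.1 q.1 ≤ p.2 + q.2) → ∃ c, ∀ p ∈ T, G.dist p.1 c ≤ p.2

/-- The Helly property for triples consisting of a disk of radius `k` and two disks of radius `j`,
with pairwise intersection expressed through distances as in `LocallyHelly`. -/
def TripleHelly (G : SimpleGraph V) (k j : ℕ) : Prop :=
  ∀ v x y : V, G.dist v x ≤ k + j → G.dist v y ≤ k + j → G.dist x y ≤ j + j →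
    ∃ c, G.dist v c ≤ k ∧ G.dist x c ≤ j ∧ G.dist y c ≤ j

theorem locallyHelly_of_radius_function (hG : G.Connected) {J : ℕ}
    (h : ∀ (S : Set V) (r : V → ℕ), (∀ v ∈ S, r v ≤ J) →
      (∀ u ∈ S, ∀ v ∈ S, ∃ w, G.dist u w ≤ r u ∧ G.dist v w ≤ r v) →
      ∃ c, ∀ v ∈ S, G.dist v c ≤ r v) :
    LocallyHelly G J := by
  intro T hTJ hT
  -- Among concentric disks only the smallest one matters.
  let r : V → ℕ := fun v => sInf {n | (v, n) ∈ T}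
  have hr : ∀ v ∈ Prod.fst '' T, (v, r v) ∈ T := by
    rintro _ ⟨⟨v, n⟩, hvn, rfl⟩
    exact Nat.sInf_mem (s := {n | (v, n) ∈ T}) ⟨n, hvn⟩
  obtain ⟨c, hc⟩ := h (Prod.fst '' T) r (fun v hv => hTJ _ (hr v hv))
    fun u hu v hv => (disks_intersect_iff hG).2 (hT _ (hr u hu) _ (hr v hv))
  exact ⟨c, fun p hp => (hc p.1 ⟨p, hp, rfl⟩).trans (Nat.sInf_le hp)⟩

namespace LocallyHelly

variable {j J k : ℕ}

theorem mono (hl : LocallyHelly G J) (hj : j ≤ J) : LocallyHelly G j :=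
  fun T hT => hl T fun p hp => (hT p hp).trans hj

theorem exists_common_vertex_three (hl : LocallyHelly G J) {x y z : V} {a b c : ℕ}
    (ha : a ≤ J) (hb : b ≤ J) (hc : c ≤ J) (hxy : G.dist x y ≤ a + b)
    (hxz : G.dist x z ≤ a + c) (hyz : G.dist y z ≤ b + c) :
    ∃ w, G.dist x w ≤ a ∧ G.dist y w ≤ b ∧ G.dist z w ≤ c := by
  have hyx := G.dist_comm (u := x) (v := y)
  have hzx := G.dist_comm (u := x) (v := z)
  have hzy := G.dist_comm (u := y) (v := z)
  simpa using hl {(x, a), (y, b), (z, c)} (by simp [ha, hb, hc])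
    (by
      simp only [Set.mem_insert_iff, Set.mem_singleton_iff, forall_eq_or_imp, forall_eq, dist_self]
      omega)

theorem exists_common_vertex_of_dist_le_two (hl : LocallyHelly G 1) {A : Set V}
    (hA : ∀ p ∈ A, ∀ q ∈ A, G.dist p q ≤ 2) : ∃ w, ∀ p ∈ A, G.dist p w ≤ 1 := by
  obtain ⟨w, hw⟩ := hl ((·, 1) '' A) (by simp) (by simpa using hA)
  exact ⟨w, by simpa using hw⟩

theorem exists_common_vertex_of_approx (hG : G.Connected) (hl : LocallyHelly G J) {e : ℕ}
    (he : e ≤ J) (hj : j ≤ J) {v x y z : V} (hxy : G.dist x y ≤ j + j)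
    (hv : G.dist v z + e ≤ k) (hx : G.dist x z ≤ j + e) (hy : G.dist y z ≤ j + e) :
    ∃ c, G.dist v c ≤ k ∧ G.dist x c ≤ j ∧ G.dist y c ≤ j := by
  obtain ⟨c, hxc, hyc, hzc⟩ := hl.exists_common_vertex_three hj hj he hxy hx hy
  have hvzc : G.dist v c ≤ G.dist v z + G.dist z c := hG.dist_triangle
  exact ⟨c, by omega, hxc, hyc⟩

theorem exists_common_vertex_of_closer (hG : G.Connected) (hl : LocallyHelly G J) (hJ : 1 ≤ J)
    (hT : TripleHelly G k J) {v x y x' y' : V} (hxy : G.dist x y ≤ J + J)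
    (hxx' : G.dist x x' ≤ 1) (hyy' : G.dist y y' ≤ 1) (hvx' : G.dist v x' ≤ k + J)
    (hvy' : G.dist v y' ≤ k + J) (hxy' : G.dist x' y' ≤ J + J) :
    ∃ c, G.dist v c ≤ k + 1 ∧ G.dist x c ≤ J ∧ G.dist y c ≤ J := by
  obtain ⟨z, hvz, hxz, hyz⟩ := hT v x' y' hvx' hvy' hxy'
  have hxx'z : G.dist x z ≤ G.dist x x' + G.dist x' z := hG.dist_triangle
  have hyy'z : G.dist y z ≤ G.dist y y' + G.dist y' z := hG.dist_triangle
  exact hl.exists_common_vertex_of_approx hG (e := 1) (z := z) hJ le_rfl hxy (by omega) (by omega)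
    (by omega)

theorem exists_common_vertex_of_midpoint (hG : G.Connected) (hl : LocallyHelly G (J + 1))
    (hk : TripleHelly G k (J + 1)) (hkJ : TripleHelly G (k + J) (J + 1)) {v x y z : V}
    (hvx : G.dist v x ≤ k + (J + 1) + (J + 1)) (hvy : G.dist v y ≤ k + (J + 1) + (J + 1))
    (hxz : G.dist x z ≤ J + 1) (hyz : G.dist y z ≤ J + 1)
    (hvz : G.dist v z ≤ k + J + (J + 1) + J) :
    ∃ c, G.dist v c ≤ k + (J + 1) ∧ G.dist x c ≤ J + 1 ∧ G.dist y c ≤ J + 1 := by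
  obtain ⟨t, hvt, hzt⟩ := (disks_intersect_iff hG).2 hvz
  have exists_towards_midpoint : ∀ s, G.dist v s ≤ k + (J + 1) + (J + 1) → G.dist s z ≤ J + 1 →
      ∃ p, G.dist v p ≤ k + (J + 1) ∧ G.dist s p ≤ J + 1 ∧ G.dist t p ≤ J + 1 := by
    intro s hvs hsz
    obtain ⟨s', hvs', hss'⟩ :=
      (disks_intersect_iff hG (a := k + J + (J + 1)) (b := 1)).2 (hvs.trans (by omega))
    have hst : G.dist s t ≤ G.dist s z + G.dist z t := hG.dist_triangle
    have hst' : G.dist s' t ≤ G.dist s' s + G.dist s t := hG.dist_triangle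
    rw [G.dist_comm (u := s') (v := s)] at hst'
    exact hl.exists_common_vertex_of_closer hG (by omega) hkJ (by omega) hss' (by simp) hvs' hvt
      (by omega)
  obtain ⟨p, hvp, hxp, htp⟩ := exists_towards_midpoint x hvx hxz
  obtain ⟨q, hvq, hyq, htq⟩ := exists_towards_midpoint y hvy hyz
  have hpq : G.dist p q ≤ J + 1 + (J + 1) :=
    (disks_intersect_iff hG).1 ⟨t, dist_comm.trans_le htp, dist_comm.trans_le htq⟩
  obtain ⟨w, hvw, hpw, hqw⟩ := hk v p q hvp hvq hpq
  have hxw : G.dist x w ≤ G.dist x p + G.dist p w := hG.dist_triangle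
  have hyw : G.dist y w ≤ G.dist y q + G.dist q w := hG.dist_triangle
  exact hl.exists_common_vertex_of_approx hG (e := J + 1) (z := w) le_rfl le_rfl
    ((disks_intersect_iff hG).1 ⟨z, hxz, hyz⟩) (by omega) (by omega) (by omega)

theorem tripleHelly_of_hyperbolic (hG : G.Connected) (hl : LocallyHelly G (J + 1))
    (hhyp : ∀ u v w x : V, G.dist u v + G.dist w x ≤
      max (G.dist u w + G.dist v x) (G.dist u x + G.dist v w) + (2 * J + 1)) (k : ℕ) :
    TripleHelly G k (J + 1) := by
  induction k using Nat.strong_induction_on with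
  | _ k ih =>
  intro v x y hvx hvy hxy
  rcases le_or_gt k (J + 1) with hk | hk
  · exact hl.exists_common_vertex_three hk le_rfl le_rfl hvx hvy hxy
  obtain ⟨k, rfl⟩ : ∃ m, k = m + (J + 1) := ⟨k - (J + 1), by omega⟩
  obtain ⟨x', hvx', hxx'⟩ :=
    (disks_intersect_iff hG (a := k + J + (J + 1)) (b := 1)).2 (hvx.trans (by omega))
  obtain ⟨y', hvy', hyy'⟩ :=
    (disks_intersect_iff hG (a := k + J + (J + 1)) (b := 1)).2 (hvy.trans (by omega))
  rcases le_or_gt (G.dist x' y') (J + 1 + (J + 1)) with hxy' | hxy'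
  · exact hl.exists_common_vertex_of_closer hG (by omega) (ih (k + J) (by omega)) hxy hxx' hyy'
      hvx' hvy' hxy'
  obtain ⟨z, hxz, hyz⟩ := (disks_intersect_iff hG).2 hxy
  have hx'z : G.dist x' z ≤ 1 + (J + 1) := by
    rw [G.dist_comm] at hxx'
    exact hG.dist_triangle.trans (add_le_add hxx' hxz)
  have hy'z : G.dist y' z ≤ 1 + (J + 1) := by
    rw [G.dist_comm] at hyy'
    exact hG.dist_triangle.trans (add_le_add hyy' hyz)
  have hvz : G.dist v z ≤ k + J + (J + 1) + J := by
    have := hhyp x' y' z v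
    rw [G.dist_comm (u := z), G.dist_comm (v := v), G.dist_comm (v := v)] at this
    omega
  exact hl.exists_common_vertex_of_midpoint hG (ih k (by omega)) (ih (k + J) (by omega)) hvx hvy
    hxz hyz hvz

theorem tripleHelly_of_succ (hG : G.Connected) (hl : LocallyHelly G j) (hj : 1 ≤ j)
    (hT : ∀ k, TripleHelly G k (j + 1)) (k : ℕ) : TripleHelly G k j := by
  intro v x y hvx hvy hxy
  cases k with
  | zero => exact hl.exists_common_vertex_three (Nat.zero_le j) le_rfl le_rfl hvx hvy hxy
  | succ k =>
    obtain ⟨z, hvz, hxz, hyz⟩ := hT k v x y (by omega) (by omega) (by omega)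
    exact hl.exists_common_vertex_of_approx hG hj le_rfl hxy (by omega) hxz hyz

theorem tripleHelly_one_of_hyperbolic (hG : G.Connected) (hl : LocallyHelly G (J + 1))
    (hhyp : ∀ u v w x : V, G.dist u v + G.dist w x ≤
      max (G.dist u w + G.dist v x) (G.dist u x + G.dist v w) + (2 * J + 1)) :
    ∀ k, TripleHelly G k 1 :=
  Nat.decreasingInduction' (P := fun j => ∀ k, TripleHelly G k j)
    (fun _ hj h1j hT => (hl.mono hj.le).tripleHelly_of_succ hG h1j hT)
    (Nat.le_add_left 1 J) (hl.tripleHelly_of_hyperbolic hG hhyp)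

end LocallyHelly

theorem exists_common_vertex_unit_and_two_disks (hG : G.Connected)
    (hT : ∀ k, TripleHelly G k 1) {c u v : V} {a b : ℕ} (hcu : G.dist c u ≤ 1 + a)
    (hcv : G.dist c v ≤ 1 + b) (huv : G.dist u v ≤ a + b) :
    ∃ y, G.dist c y ≤ 1 ∧ G.dist u y ≤ a ∧ G.dist v y ≤ b := by
  induction a generalizing b c with
  | zero =>
    rw [G.dist_comm] at huv
    exact ⟨u, hcu, by simp, by omega⟩
  | succ a ih =>
    -- Replace `c` by a neighbour `w` on the way to `u`, at the cost of enlarging the disk at `v`.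
    obtain ⟨w, hcw, huw⟩ := (disks_intersect_iff hG (a := 1) (b := 1 + a)).2 (hcu.trans (by omega))
    rw [G.dist_comm] at huw
    have hwv : G.dist w v ≤ G.dist w c + G.dist c v := hG.dist_triangle
    rw [G.dist_comm (v := c)] at hwv
    obtain ⟨y, hwy, huy, hvy⟩ := ih (b := b + 1) (c := w) huw (by omega) (by omega)
    obtain ⟨q, hvq, hcq, hyq⟩ := hT b v c y (by rw [G.dist_comm]; omega) hvy
      (hG.dist_triangle.trans (add_le_add hcw hwy))
    exact ⟨q, hcq, hG.dist_triangle.trans (add_le_add huy hyq), hvq⟩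

theorem exists_common_vertex_disk_and_units (hG : G.Connected) (hl : LocallyHelly G 1)
    (hT : ∀ k, TripleHelly G k 1) {u : V} {k : ℕ} {A : Set V}
    (huA : ∀ p ∈ A, G.dist u p ≤ k + 1) (hA : ∀ p ∈ A, ∀ q ∈ A, G.dist p q ≤ 2) :
    ∃ y, G.dist u y ≤ k ∧ ∀ p ∈ A, G.dist p y ≤ 1 := by
  induction k generalizing A with
  | zero => exact ⟨u, by simp, fun p hp => dist_comm.trans_le (huA p hp)⟩
  | succ k ih =>
    rcases A.eq_empty_or_nonempty with rfl | ⟨a, ha⟩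
    · exact ⟨u, by simp⟩
    -- Pulling all of `A` one step towards `u`, within the unit disk of a fixed `a ∈ A`, keeps the
    -- unit disks pairwise intersecting.
    choose! f huf haf hf using fun p hp => hT (k + 1) u a p (huA a ha) (huA p hp) (hA a ha p hp)
    obtain ⟨t, hut, hft⟩ := ih (A := f '' A) (Set.forall_mem_image.2 huf)
      (Set.forall_mem_image.2 fun p hp => Set.forall_mem_image.2 fun q hq =>
        (disks_intersect_iff hG).1
          ⟨a, dist_comm.trans_le (haf p hp), dist_comm.trans_le (haf q hq)⟩)
    have htA : ∀ p ∈ A, G.dist p t ≤ 2 := fun p hp =>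
      hG.dist_triangle.trans (add_le_add (hf p hp) (hft _ (Set.mem_image_of_mem f hp)))
    obtain ⟨y, hy⟩ := hl.exists_common_vertex_of_dist_le_two (A := insert t A) (by
      simp only [Set.forall_mem_insert, dist_self, zero_le, true_and]
      exact ⟨fun p hp => dist_comm.trans_le (htA p hp), fun p hp => ⟨htA p hp, hA p hp⟩⟩)
    rw [Set.forall_mem_insert] at hy
    exact ⟨y, hG.dist_triangle.trans (add_le_add hut hy.1), hy.2⟩

theorem exists_gate (hG : G.Connected) (hl : LocallyHelly G 1) (hT : ∀ k, TripleHelly G k 1)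
    (c u : V) (k : ℕ) :
    ∃ g, G.dist u g ≤ k ∧ ∀ p, G.dist c p ≤ 1 → G.dist u p ≤ k + 1 → G.dist p g ≤ 1 := by
  obtain ⟨g, hug, hg⟩ := exists_common_vertex_disk_and_units hG hl hT (u := u) (k := k)
    (A := {p | G.dist c p ≤ 1 ∧ G.dist u p ≤ k + 1}) (fun p hp => hp.2)
    fun p hp q hq => (disks_intersect_iff hG).1
      ⟨c, dist_comm.trans_le hp.1, dist_comm.trans_le hq.1⟩
  exact ⟨g, hug, fun p hcp hup => hg p ⟨hcp, hup⟩⟩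

theorem exists_common_vertex_of_enlarged (hG : G.Connected) (hl : LocallyHelly G 1)
    (hT : ∀ k, TripleHelly G k 1) {S : Set V} {r : V → ℕ}
    (hS : ∀ u ∈ S, ∀ v ∈ S, G.dist u v ≤ r u + r v) (h : ∃ c, ∀ v ∈ S, G.dist v c ≤ r v + 1) :
    ∃ c, ∀ v ∈ S, G.dist v c ≤ r v := by
  obtain ⟨c, hc⟩ := h
  by_cases h0 : ∃ u ∈ S, r u = 0
  · obtain ⟨u, hu, hu0⟩ := h0
    exact ⟨u, fun v hv => by simpa only [hu0, add_zero] using hS v hv u hu⟩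
  push Not at h0
  have gate : ∀ u ∈ S, ∃ g, G.dist u g + 1 ≤ r u ∧
      ∀ p, G.dist c p ≤ 1 → G.dist u p ≤ r u → G.dist p g ≤ 1 := by
    intro u hu
    obtain ⟨k, hk⟩ := Nat.exists_eq_succ_of_ne_zero (h0 u hu)
    simpa only [hk, Nat.succ_eq_add_one, add_le_add_iff_right] using exists_gate hG hl hT c u k
  have : Nonempty V := ⟨c⟩
  choose! g hug hg using gate
  have dist_gates : ∀ u ∈ S, ∀ v ∈ S, G.dist (g u) (g v) ≤ 2 := by
    intro u hu v hv
    have hcS : ∀ w ∈ S, G.dist c w ≤ 1 + r w := fun w hw => by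
      simpa only [G.dist_comm, add_comm] using hc w hw
    obtain ⟨y, hcy, huy, hvy⟩ :=
      exists_common_vertex_unit_and_two_disks hG hT (hcS u hu) (hcS v hv) (hS u hu v hv)
    exact (disks_intersect_iff hG).1
      ⟨y, dist_comm.trans_le (hg u hu y hcy huy), dist_comm.trans_le (hg v hv y hcy hvy)⟩
  obtain ⟨w, hw⟩ := hl.exists_common_vertex_of_dist_le_two (A := g '' S)
    (Set.forall_mem_image.2 fun u hu => Set.forall_mem_image.2 (dist_gates u hu))
  exact ⟨w, fun v hv => (hG.dist_triangle.trans
    (Nat.add_le_add_left (hw _ (Set.mem_image_of_mem g hv)) _)).trans (hug v hv)⟩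

theorem hellyGraph_of_tripleHelly (hG : G.Connected) (hl : LocallyHelly G 1)
    (hT : ∀ k, TripleHelly G k 1) : HellyGraph G := by
  intro S r hS
  simp only [disks_intersect_iff hG] at hS
  have shrink : ∀ k, (∃ c, ∀ v ∈ S, G.dist v c ≤ r v + k) → ∃ c, ∀ v ∈ S, G.dist v c ≤ r v := by
    intro k hk
    induction k with
    | zero => exact hk
    | succ k ih =>
      exact ih (exists_common_vertex_of_enlarged hG hl hT (r := fun v => r v + k)
        (fun u hu v hv => (hS u hu v hv).trans (by omega)) hk)
  rcases S.eq_empty_or_nonempty with rfl | ⟨u, hu⟩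
  · obtain ⟨c⟩ := hG.nonempty
    exact ⟨c, by simp⟩
  · exact shrink (r u) ⟨u, fun v hv => hS v hv u hu⟩

end

theorem helly_of_hyperbolic_of_local_helly_general
    {V : Type*} (G : SimpleGraph V) (hconn : G.Connected)
    (δ2 : ℕ)
    (hhyp : ∀ u v w x : V,
      G.dist u v + G.dist w x ≤
        max (G.dist u w + G.dist v x) (G.dist u x + G.dist v w) + δ2)
    (hloc : ∀ (S : Set V) (r : V → ℕ),
      (∀ v ∈ S, 2 * r v ≤ δ2 + 2) →
      (∀ u ∈ S, ∀ v ∈ S, ∃ w, G.dist u w ≤ r u ∧ G.dist v w ≤ r v) →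
      ∃ c, ∀ v ∈ S, G.dist v c ≤ r v) :
    HellyGraph G := by
  have hl : LocallyHelly G (δ2 / 2 + 1) := locallyHelly_of_radius_function hconn fun S r hr =>
    hloc S r fun v hv => by have := hr v hv; omega
  have hT : ∀ k, TripleHelly G k 1 := hl.tripleHelly_one_of_hyperbolic hconn
    fun u v w x => (hhyp u v w x).trans (by omega)
  exact hellyGraph_of_tripleHelly hconn (hl.mono (Nat.le_add_left 1 _)) hT

/-- If `G` is `δ`-hyperbolic (where `δ2 = 2δ`) and every family of pairwise intersecting
disks of radii at most `δ + 1` (i.e. `2r ≤ 2δ + 2`) has a common vertex, then `G` is a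
Helly graph. -/
theorem helly_of_hyperbolic_of_local_helly
    {V : Type*} [Fintype V] (G : SimpleGraph V) (hconn : G.Connected)
    (δ2 : ℕ)
    (hhyp : ∀ u v w x : V,
      G.dist u v + G.dist w x ≤
        max (G.dist u w + G.dist v x) (G.dist u x + G.dist v w) + δ2)
    (hloc : ∀ (S : Set V) (r : V → ℕ),
      (∀ v ∈ S, 2 * r v ≤ δ2 + 2) →
      (∀ u ∈ S, ∀ v ∈ S, ∃ w, G.dist u w ≤ r u ∧ G.dist v w ≤ r v) →
      ∃ c, ∀ v ∈ S, G.dist v c ≤ r v) :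
    HellyGraph G :=
  helly_of_hyperbolic_of_local_helly_general G hconn δ2 hhyp hloc
end

section
/- If G is a Helly graph that contains no induced wheel W_k for any k ≥ 4, then G is chordal. -/
/-!
Fix a vertex `z` and, among all induced cycles of length at least 4, consider one minimizing the sum
of the distances from `z` to its vertices. Let `v` be a vertex of the cycle farthest from `z`. The
disk of radius `d(z, v) - 1` around `z`, the disks of radius 1 around the two cycle neighbours of
`v`, and the disk of radius 1 around `v` pairwise intersect, so they share a vertex `u`. It is
closer to `z` than `v` and adjacent to `v` and to both its neighbours. If `u` is adjacent to the
whole cycle, the two form an induced wheel. Otherwise `u` has two neighbours on the path obtained by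
deleting `v`, at distance at least 2 along it and with no neighbour of `u` strictly between them,
and together with the subpath they span, `u` forms an induced cycle of length at least 4 with a
smaller distance sum.
-/

open SimpleGraph

/-- `G` contains the cycle `C_n` as an induced subgraph. -/
def HasInducedCycle {V : Type*} (G : SimpleGraph V) (n : ℕ) : Prop :=
  ∃ f : Fin n → V, Function.Injective f ∧
    ∀ i j, (cycleGraph n).Adj i j ↔ G.Adj (f i) (f j)

/-- `G` is chordal: it has no induced cycle of length at least 4. -/
def Chordal {V : Type*} (G : SimpleGraph V) : Prop :=
  ∀ n, 4 ≤ n → ¬ HasInducedCycle G n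

/-- `G` contains the wheel `W_k` (a `k`-cycle plus a vertex adjacent to all of its
vertices) as an induced subgraph. -/
def HasInducedWheel {V : Type*} (G : SimpleGraph V) (k : ℕ) : Prop :=
  ∃ (f : Fin k → V) (c : V), Function.Injective f ∧ c ∉ Set.range f ∧
    (∀ i j, (cycleGraph k).Adj i j ↔ G.Adj (f i) (f j)) ∧
    ∀ i, G.Adj c (f i)

section Helly

variable {V : Type*} {G : SimpleGraph V}

lemma exists_dist_le_of_dist_le_add {u v : V} (huv : G.Reachable u v) {r s : ℕ}
    (h : G.dist u v ≤ r + s) : ∃ w, G.dist u w ≤ r ∧ G.dist v w ≤ s := by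
  obtain ⟨p, hp⟩ := huv.exists_walk_length_eq_dist
  refine ⟨p.getVert r, (dist_le (p.take r)).trans ?_, dist_comm.trans_le
    ((dist_le (p.drop r)).trans ?_)⟩
  · rw [Walk.take_length]
    exact min_le_left _ _
  · rw [Walk.drop_length]
    omega

lemma HellyGraph.exists_forall_dist_le (hG : HellyGraph G) (hconn : G.Connected) {ι : Type*}
    (x : ι → V) (r : ι → ℕ) (h : ∀ i j, G.dist (x i) (x j) ≤ r i + r j) :
    ∃ c, ∀ i, G.dist (x i) c ≤ r i := by
  -- `HellyGraph` allows one disk per centre: keep the smallest radius prescribed there.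
  let ρ (v : V) : ℕ := sInf (r '' {i | x i = v})
  have radius_attained (i : ι) : ∃ k, x k = x i ∧ r k = ρ (x i) :=
    Nat.sInf_mem (s := r '' {k | x k = x i}) ⟨r i, i, rfl, rfl⟩
  obtain ⟨c, hc⟩ := hG (Set.range x) ρ <| by
    rintro _ ⟨i, rfl⟩ _ ⟨j, rfl⟩
    obtain ⟨k, hk, hrk⟩ := radius_attained i
    obtain ⟨l, hl, hrl⟩ := radius_attained j
    rw [← hrk, ← hrl, ← hk, ← hl]
    exact exists_dist_le_of_dist_le_add (hconn _ _) (h k l)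
  exact ⟨c, fun i ↦ (hc (x i) ⟨i, rfl⟩).trans (Nat.sInf_le ⟨i, rfl, rfl⟩)⟩

lemma HellyGraph.exists_closer_adj (hG : HellyGraph G) (hconn : G.Connected) {z v : V}
    (hzv : z ≠ v) :
    ∃ u, G.dist z u < G.dist z v ∧ G.Adj v u ∧
      ∀ w, G.Adj w v → G.dist z w ≤ G.dist z v → w = u ∨ G.Adj w u := by
  have hpos := hconn.pos_dist_of_ne hzv
  have eq_or_adj {a b : V} (h : G.dist a b ≤ 1) : a = b ∨ G.Adj a b := by
    by_contra! hab
    exact h.not_gt (hconn.one_lt_dist_of_ne_of_not_adj hab.1 hab.2)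
  let W := {w | G.dist w v ≤ 1 ∧ G.dist z w ≤ G.dist z v}
  obtain ⟨u, hu⟩ := hG.exists_forall_dist_le hconn
    (fun i : Option W ↦ i.elim z (↑)) (fun i ↦ i.elim (G.dist z v - 1) fun _ ↦ 1) <| by
    rintro (_ | ⟨a, hav, hza⟩) (_ | ⟨b, hbv, hzb⟩) <;> simp only [Option.elim]
    · simp
    · omega
    · rw [dist_comm]
      omega
    · have := hconn.dist_triangle (u := a) (v := v) (w := b)
      rw [dist_comm (u := v)] at this
      omega
  have hzu : G.dist z u ≤ G.dist z v - 1 := hu none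
  have hclose (w : V) (hw : w ∈ W) : w = u ∨ G.Adj w u := eq_or_adj (hu (some ⟨w, hw⟩))
  refine ⟨u, by omega, (hclose v ⟨by simp, le_rfl⟩).resolve_left ?_, fun w hwv hzw ↦
    hclose w ⟨(dist_eq_one_iff_adj.2 hwv).le, hzw⟩⟩
  rintro rfl
  omega

end Helly

section PathsAndCycles

/-- The vertex `i` is one of the two ends of `pathGraph n`. -/
def IsPathEnd {n : ℕ} (i : Fin n) : Prop :=
  (i : ℕ) = 0 ∨ (i : ℕ) + 1 = n

/-- The subpath of `pathGraph n` on `m` consecutive vertices, beginning at vertex `a`. -/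
def pathGraphShift {m n : ℕ} (a : ℕ) (h : a + m ≤ n) : pathGraph m ↪g pathGraph n where
  toFun i := ⟨a + i, by omega⟩
  inj' i j hij := by simpa [Fin.ext_iff] using hij
  map_rel_iff' {i j} := by
    change (pathGraph n).Adj ⟨a + i, _⟩ ⟨a + j, _⟩ ↔ _
    simp only [pathGraph_adj]
    omega

lemma cycleGraph_adj_zero_succ {n : ℕ} {i : Fin n} :
    (cycleGraph (n + 1)).Adj 0 i.succ ↔ IsPathEnd i := by
  rw [cycleGraph_adj', sub_zero, Fin.coe_sub_iff_lt.2 i.succ_pos, Fin.val_succ, Fin.val_zero,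
    IsPathEnd]
  omega

lemma cycleGraph_adj_succ_succ {n : ℕ} {i j : Fin n} :
    (cycleGraph (n + 1)).Adj i.succ j.succ ↔ (pathGraph n).Adj i j := by
  wlog hij : i ≤ j generalizing i j
  · rw [adj_comm, this (le_of_not_ge hij), adj_comm]
  obtain rfl | hlt := hij.eq_or_lt
  · simp
  rw [cycleGraph_adj', pathGraph_adj, Fin.coe_sub_iff_lt.2 (Fin.succ_lt_succ_iff.2 hlt),
    Fin.coe_sub_iff_le.2 (Fin.succ_le_succ_iff.2 hij), Fin.val_succ, Fin.val_succ]
  omega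

/-- The path obtained by deleting the vertex `0` from a cycle. -/
def pathGraphSucc (n : ℕ) : pathGraph n ↪g cycleGraph (n + 1) where
  toFun := Fin.succ
  inj' := Fin.succ_injective n
  map_rel_iff' := cycleGraph_adj_succ_succ

/-- The rotation of a cycle by `s` steps, moving the vertex `0` to `s`. -/
def cycleGraphRotate {n : ℕ} (s : Fin (n + 1)) : cycleGraph (n + 1) ≃g cycleGraph (n + 1) where
  toEquiv := Equiv.addRight s
  map_rel_iff' := by
    rw [cycleGraph_eq_circulantGraph]
    exact circulantGraph_adj_translate

variable {V : Type*} {G : SimpleGraph V}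

/-- An induced path closed up to an induced cycle by an additional vertex `u`, adjacent to exactly
the ends of the path. The vertex `u` comes first. -/
def closePath {n : ℕ} (p : pathGraph n ↪g G) (u : V) (hu : u ∉ Set.range p)
    (hadj : ∀ i, G.Adj u (p i) ↔ IsPathEnd i) : cycleGraph (n + 1) ↪g G where
  toFun := Fin.cons u p
  inj' := Fin.cons_injective_iff.2 ⟨hu, p.injective⟩
  map_rel_iff' {i j} := by
    cases i using Fin.cases with
    | zero =>
      cases j using Fin.cases with
      | zero => simp
      | succ j => exact (hadj j).trans cycleGraph_adj_zero_succ.symm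
    | succ i =>
      cases j using Fin.cases with
      | zero =>
        rw [adj_comm, adj_comm _ i.succ]
        exact (hadj i).trans cycleGraph_adj_zero_succ.symm
      | succ j => exact p.map_adj_iff.trans cycleGraph_adj_succ_succ.symm

lemma exists_lt_lt_forall_Ioo_not {α : Type*} [LinearOrder α] [LocallyFiniteOrder α]
    {P : α → Prop} {x k y : α} (hxk : x ≤ k) (hky : k ≤ y) (hx : P x) (hy : P y) (hk : ¬ P k) :
    ∃ a b, a < k ∧ k < b ∧ P a ∧ P b ∧ ∀ i ∈ Set.Ioo a b, ¬ P i := by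
  replace hxk : x < k := hxk.lt_of_ne fun h ↦ hk (h ▸ hx)
  replace hky : k < y := hky.lt_of_ne fun h ↦ hk (h ▸ hy)
  obtain ⟨a, ⟨⟨hxa, hak⟩, ha⟩, hmax⟩ := Set.exists_max_image {i ∈ Set.Ico x k | P i} id
    ((Set.finite_Ico x k).sep P) ⟨x, ⟨le_rfl, hxk⟩, hx⟩
  obtain ⟨b, ⟨⟨hkb, hby⟩, hb⟩, hmin⟩ := Set.exists_min_image {i ∈ Set.Ioc k y | P i} id
    ((Set.finite_Ioc k y).sep P) ⟨y, ⟨hky, le_rfl⟩, hy⟩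
  refine ⟨a, b, hak, hkb, ha, hb, fun i ⟨hai, hib⟩ hi ↦ ?_⟩
  obtain hik | rfl | hki := lt_trichotomy i k
  · exact (hmax i ⟨⟨hxa.trans hai.le, hik⟩, hi⟩).not_gt hai
  · exact hk hi
  · exact (hmin i ⟨⟨hki, hib.le.trans hby⟩, hi⟩).not_gt hib

lemma exists_pathGraph_embedding_iff_isPathEnd {n : ℕ} {P : Fin n → Prop}
    (hend : ∀ i, IsPathEnd i → P i) {k : Fin n} (hk : ¬ P k) :
    ∃ m, 3 ≤ m ∧ ∃ e : pathGraph m ↪g pathGraph n, ∀ i, P (e i) ↔ IsPathEnd i := by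
  obtain _ | n := n
  · exact k.elim0
  obtain ⟨a, b, hak, hkb, ha, hb, hgap⟩ := exists_lt_lt_forall_Ioo_not k.zero_le k.le_last
    (hend 0 (.inl rfl)) (hend (Fin.last n) (.inr rfl)) hk
  rw [Fin.lt_def] at hak hkb
  let e : pathGraph ((b : ℕ) - a + 1) ↪g pathGraph (n + 1) := pathGraphShift a (by omega)
  refine ⟨(b : ℕ) - a + 1, by omega, e, fun i ↦ ?_⟩
  have he : (e i : ℕ) = a + i := rfl
  refine ⟨fun hi ↦ ?_, ?_⟩
  · by_contra hi_inner
    rw [IsPathEnd] at hi_inner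
    exact hgap (e i) ⟨Fin.lt_def.2 (by omega), Fin.lt_def.2 (by omega)⟩ hi
  · rintro (hi | hi)
    · rwa [show e i = a from Fin.ext (by omega)]
    · rwa [show e i = b from Fin.ext (by omega)]

lemma notMem_range_of_forall_adj_zero {n : ℕ} (hn : 3 ≤ n) (f : cycleGraph (n + 1) ↪g G) {u : V}
    (hu : G.Adj (f 0) u) (hnear : ∀ i, G.Adj (f i) (f 0) → f i = u ∨ G.Adj (f i) u) :
    u ∉ Set.range f := by
  rintro ⟨j, rfl⟩
  simp only [f.map_adj_iff, f.injective.eq_iff] at hu hnear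
  obtain ⟨j, rfl⟩ := Fin.exists_succ_eq.2 hu.ne'
  rw [cycleGraph_adj_zero_succ] at hu
  -- The other neighbour of `0` is too far from `j`.
  have hrev : IsPathEnd j.rev := by
    simp only [IsPathEnd, Fin.val_rev] at hu ⊢
    omega
  have := hnear j.rev.succ (cycleGraph_adj_zero_succ.2 hrev).symm
  rw [Fin.succ_inj, cycleGraph_adj_succ_succ, pathGraph_adj, Fin.ext_iff, Fin.val_rev] at this
  rw [IsPathEnd] at hu
  omega

end PathsAndCycles

section Descent

variable {V : Type*} {G : SimpleGraph V}

lemma hasInducedCycle_iff_isIndContained {n : ℕ} : HasInducedCycle G n ↔ cycleGraph n ⊴ G :=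
  ⟨fun ⟨f, hinj, hf⟩ ↦ ⟨⟨⟨f, hinj⟩, (hf _ _).symm⟩⟩,
    fun ⟨f⟩ ↦ ⟨f, f.injective, fun _ _ ↦ f.map_adj_iff.symm⟩⟩

lemma hasInducedWheel_of_forall_adj {n : ℕ} (f : cycleGraph n ↪g G) {c : V}
    (hc : ∀ i, G.Adj c (f i)) : HasInducedWheel G n :=
  ⟨f, c, f.injective, fun ⟨i, hi⟩ ↦ (hc i).ne hi.symm, fun _ _ ↦ f.map_adj_iff.symm, hc⟩

lemma exists_cycle_sum_lt {n : ℕ} (hn : 3 ≤ n) (f : cycleGraph (n + 1) ↪g G)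
    (hwheel : ¬ HasInducedWheel G (n + 1)) {u : V} (hu : G.Adj (f 0) u)
    (hnear : ∀ i, G.Adj (f i) (f 0) → f i = u ∨ G.Adj (f i) u)
    (φ : V → ℕ) (hφ : φ u < φ (f 0)) :
    ∃ m, 3 ≤ m ∧ ∃ g : cycleGraph (m + 1) ↪g G, ∑ i, φ (g i) < ∑ i, φ (f i) := by
  have hu_range := notMem_range_of_forall_adj_zero hn f hu hnear
  have hend (i : Fin n) (hi : IsPathEnd i) : G.Adj u (f i.succ) :=
    ((hnear i.succ (f.map_adj_iff.2 (cycleGraph_adj_zero_succ.2 hi).symm)).resolve_left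
      fun h ↦ hu_range ⟨_, h⟩).symm
  obtain ⟨k, hk⟩ : ∃ k : Fin n, ¬ G.Adj u (f k.succ) := by
    by_contra! hall
    exact hwheel (hasInducedWheel_of_forall_adj f (Fin.cases hu.symm hall))
  obtain ⟨m, hm, e, he⟩ := exists_pathGraph_embedding_iff_isPathEnd hend hk
  let p : pathGraph m ↪g G := f.comp ((pathGraphSucc n).comp e)
  have hp : u ∉ Set.range p := fun ⟨i, hi⟩ ↦ hu_range ⟨_, hi⟩
  refine ⟨m, hm, closePath p u hp he, ?_⟩
  calc ∑ i, φ (closePath p u hp he i)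
      = φ u + ∑ i, φ (f (e i).succ) := Fin.sum_univ_succ _
    _ ≤ φ u + ∑ i : Fin n, φ (f i.succ) := by
      gcongr
      exact (Finset.sum_map Finset.univ e.toEmbedding fun i ↦ φ (f i.succ)).symm.trans_le
        (Finset.sum_le_univ_sum_of_nonneg fun _ ↦ Nat.zero_le _)
    _ < φ (f 0) + ∑ i : Fin n, φ (f i.succ) := by gcongr
    _ = ∑ i, φ (f i) := (Fin.sum_univ_succ fun i ↦ φ (f i)).symm

lemma HellyGraph.exists_cycle_sum_dist_lt (hG : HellyGraph G) (hconn : G.Connected) {n : ℕ}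
    (hn : 3 ≤ n) (f : cycleGraph (n + 1) ↪g G) (hwheel : ¬ HasInducedWheel G (n + 1)) (z : V) :
    ∃ m, 3 ≤ m ∧ ∃ g : cycleGraph (m + 1) ↪g G,
      ∑ i, G.dist z (g i) < ∑ i, G.dist z (f i) := by
  obtain ⟨s, hs⟩ := Finite.exists_max fun i ↦ G.dist z (f i)
  let f' : cycleGraph (n + 1) ↪g G := f.comp (cycleGraphRotate s).toEmbedding
  have hf'_zero : f' 0 = f s := congrArg f (zero_add s)
  have hf'_max (i) : G.dist z (f' i) ≤ G.dist z (f' 0) := (hs _).trans_eq (by rw [hf'_zero])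
  have hz : z ≠ f' 0 := by
    intro hz
    have hz_all (i) : z = f' i := hconn.dist_eq_zero_iff.1 <| by simpa [← hz] using hf'_max i
    have : (0 : Fin (n + 1)) = Fin.last n := f'.injective ((hz_all _).symm.trans (hz_all _))
    simp only [Fin.ext_iff, Fin.val_zero, Fin.val_last] at this
    omega
  obtain ⟨u, hzu, hu, hnear⟩ := hG.exists_closer_adj hconn hz
  rw [← Equiv.sum_comp (cycleGraphRotate s).toEquiv]
  exact exists_cycle_sum_lt hn f' hwheel hu (fun i hi ↦ hnear _ hi (hf'_max i)) (G.dist z) hzu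

theorem HellyGraph.exists_hasInducedWheel (hG : HellyGraph G) (hconn : G.Connected) {n : ℕ}
    (hn : 3 ≤ n) (f : cycleGraph (n + 1) ↪g G) : ∃ k, 4 ≤ k ∧ HasInducedWheel G k := by
  obtain ⟨z⟩ := hconn.nonempty
  induction hsum : ∑ i, G.dist z (f i) using Nat.strong_induction_on generalizing n f with
  | _ N ih =>
    by_cases hwheel : HasInducedWheel G (n + 1)
    · exact ⟨n + 1, by omega, hwheel⟩
    · obtain ⟨m, hm, g, hlt⟩ := hG.exists_cycle_sum_dist_lt hconn hn f hwheel z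
      exact ih _ (hsum ▸ hlt) hm g rfl

end Descent

theorem chordal_of_helly_no_induced_wheel_general {V : Type*} (G : SimpleGraph V)
    (hconn : G.Connected) (hHelly : HellyGraph G)
    (hwheel : ∀ k, 4 ≤ k → ¬ HasInducedWheel G k) : Chordal G := by
  intro n hn hcycle
  obtain ⟨f⟩ := hasInducedCycle_iff_isIndContained.1 hcycle
  obtain ⟨n, rfl⟩ := Nat.exists_eq_add_of_le' (show 1 ≤ n by omega)
  obtain ⟨k, hk, hWk⟩ := hHelly.exists_hasInducedWheel hconn (by omega) f
  exact hwheel k hk hWk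

/-- A Helly graph with no induced wheel `W_k`, `k ≥ 4`, is chordal. -/
theorem chordal_of_helly_no_induced_wheel
    {V : Type*} [Fintype V] (G : SimpleGraph V) (hconn : G.Connected)
    (hHelly : HellyGraph G)
    (hwheel : ∀ k, 4 ≤ k → ¬ HasInducedWheel G k) :
    Chordal G :=
  chordal_of_helly_no_induced_wheel_general G hconn hHelly hwheel
end

section
/- A distance-hereditary graph G is Helly if and only if for every induced 4-cycle of G on vertices w, x, y, z, the extended square S(w,x,y,z) is suspended. -/
open SimpleGraph

/-- A graph is distance-hereditary if every connected induced subgraph is isometric. -/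
def DistanceHereditary {V : Type*} (G : SimpleGraph V) : Prop :=
  ∀ s : Set V, (G.induce s).Connected →
    ∀ a b : s, (G.induce s).dist a b = G.dist (a : V) (b : V)

/-- The vertices `w, x, y, z` induce a 4-cycle in `G` (edges `wx, xy, yz, zw`,
non-edges `wy, xz`). -/
def IsInducedC4 {V : Type*} (G : SimpleGraph V) (w x y z : V) : Prop :=
  G.Adj w x ∧ G.Adj x y ∧ G.Adj y z ∧ G.Adj z w ∧
    w ≠ y ∧ x ≠ z ∧ ¬ G.Adj w y ∧ ¬ G.Adj x z

/-- `v` belongs to the closed neighborhood of `a`. -/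
def InClosedNbhd {V : Type*} (G : SimpleGraph V) (v a : V) : Prop :=
  v = a ∨ G.Adj v a

/-- The extended square `S(w,x,y,z)`: all vertices whose closed neighborhood contains at
least three of the four vertices `w, x, y, z`. -/
def ExtendedSquare {V : Type*} (G : SimpleGraph V) (w x y z : V) : Set V :=
  {v | (InClosedNbhd G v w ∧ InClosedNbhd G v x ∧ InClosedNbhd G v y) ∨
       (InClosedNbhd G v w ∧ InClosedNbhd G v x ∧ InClosedNbhd G v z) ∨
       (InClosedNbhd G v w ∧ InClosedNbhd G v y ∧ InClosedNbhd G v z) ∨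
       (InClosedNbhd G v x ∧ InClosedNbhd G v y ∧ InClosedNbhd G v z)}

/-- A set `M` is suspended if some vertex `c` is adjacent to every vertex of `M \ {c}`. -/
def Suspended {V : Type*} (G : SimpleGraph V) (M : Set V) : Prop :=
  ∃ c : V, ∀ v ∈ M, v ≠ c → G.Adj c v

/-!
The neighbours of `c` that lie on geodesics from `c` to `v` depend, in a distance-hereditary graph,
only on the component of `v` once the closed neighbourhood of `c` is deleted. Hence if `p` starts
a geodesic from `c` to `v` but none to `w`, and `q` one to `w` but none to `v`, then no edge except
possibly `pq` joins a geodesic from `p` to `v` to one from `q` to `w`. Isometry of the subgraph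
induced on the two, together with `c` when `p` and `q` are not adjacent, bounds the distance from
`v` to `w` below by `d(c, v) + d(c, w) - 1`, and by `d(c, v) + d(c, w)` in the non-adjacent case.

Suppose now that disks of positive radii pairwise intersect, and that `c` misses each of them by
at most one. For the disks it misses, the sets of geodesic neighbours are nested. Each of them is
also the common neighbourhood of two vertices at distance two, and suspension of extended squares
makes such a common neighbourhood contain a vertex dominating it. The dominating vertices form a
clique, so when cliques are finite one of them lies in all the nested sets, and it is in every
disk. Descending on the slack proves the Helly property.
-/

/-- The graph `G` has no infinite clique. -/
def HasFiniteCliques {V : Type*} (G : SimpleGraph V) : Prop :=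
  ∀ s : Set V, G.IsClique s → s.Finite

/-- The neighbours of `c` lying on a geodesic from `c` to `v`, i.e. the possible first steps
from `c` towards `v`. -/
def geodesicNeighbors {V : Type*} (G : SimpleGraph V) (c v : V) : Set V :=
  {u | G.Adj c u ∧ G.dist u v + 1 = G.dist c v}

/-- The vertex `p` together with the vertices beyond the closed neighbourhood of `c` that have
the same geodesic neighbours as `v`. For `p ∈ geodesicNeighbors G c v`, this is the region behind
`p` in which a geodesic from `p` to `v` runs. -/
def branch {V : Type*} (G : SimpleGraph V) (c p v : V) : Set V :=
  {a | a = p ∨ 2 ≤ G.dist c a ∧ geodesicNeighbors G c a = geodesicNeighbors G c v}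

lemma exists_mem_forall_mem_of_total {ι α : Type*} [Nonempty ι] {P : ι → Set α}
    (hP : ∀ i j, P i ⊆ P j ∨ P j ⊆ P i) {e : ι → α} (he : ∀ i, e i ∈ P i)
    (hfin : (Set.range e).Finite) : ∃ i, ∀ j, e i ∈ P j := by
  by_contra! hno
  choose f hf using hno
  choose! g hg using fun a (ha : a ∈ Set.range e) ↦ ha
  have hdir : Directed (· ⊇ ·) P := fun i j ↦
    (hP i j).elim (fun h ↦ ⟨i, subset_rfl, h⟩) fun h ↦ ⟨j, h, subset_rfl⟩
  obtain ⟨z, hz⟩ := hdir.finite_set_le (hfin.image (f ∘ g))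
  have hmem := hz _ ⟨e z, ⟨z, rfl⟩, rfl⟩ (he z)
  have hnot := hf (g (e z))
  rw [hg _ ⟨z, rfl⟩] at hnot
  exact hnot hmem

section Graph

variable {V : Type*} {G : SimpleGraph V}

lemma inClosedNbhd_iff_dist_le_one (hconn : G.Connected) {u v : V} :
    InClosedNbhd G u v ↔ G.dist u v ≤ 1 := by
  rw [Nat.le_one_iff_eq_zero_or_eq_one, hconn.dist_eq_zero_iff, dist_eq_one_iff_adj, InClosedNbhd]

lemma suspended_iff_exists_inClosedNbhd {M : Set V} :
    Suspended G M ↔ ∃ c, ∀ v ∈ M, InClosedNbhd G v c := by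
  simp only [Suspended, InClosedNbhd, or_iff_not_imp_left, G.adj_comm, ne_eq]

lemma exists_inClosedNbhd_of_mem_extendedSquare {w x y z u v : V}
    (hu : u ∈ ExtendedSquare G w x y z) (hv : v ∈ ExtendedSquare G w x y z) :
    ∃ t, InClosedNbhd G u t ∧ InClosedNbhd G v t := by
  simp only [ExtendedSquare, Set.mem_ofPred_eq] at hu hv
  -- Any two of the four triples from `w, x, y, z` have a member in common.
  grind

lemma HellyGraph.suspended_extendedSquare (hconn : G.Connected) (hHelly : HellyGraph G)
    (w x y z : V) : Suspended G (ExtendedSquare G w x y z) := by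
  simp only [suspended_iff_exists_inClosedNbhd, inClosedNbhd_iff_dist_le_one hconn]
  refine hHelly _ (fun _ ↦ 1) fun u hu v hv ↦ ?_
  simpa only [inClosedNbhd_iff_dist_le_one hconn] using
    exists_inClosedNbhd_of_mem_extendedSquare hu hv

lemma dist_add_one_add_dist_le_length_of_mem_darts {u v : V} (W : G.Walk u v) {d : G.Dart}
    (hd : d ∈ W.darts) : G.dist u d.fst + 1 + G.dist d.snd v ≤ W.length := by
  obtain ⟨A, B, rfl⟩ := (W.isSubwalk_toWalk_adj_iff_mem_darts).mpr hd
  have hA := dist_le A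
  have hB := dist_le B
  simp only [Walk.length_append, Walk.length_cons, Walk.length_nil]
  omega

lemma dist_add_dist_le_length_of_mem_support {u v t : V} (W : G.Walk u v)
    (ht : t ∈ W.support) : G.dist u t + G.dist t v ≤ W.length := by
  classical
  rw [← W.take_spec ht, Walk.length_append]
  exact add_le_add (dist_le _) (dist_le _)

lemma dist_le_dist_add_one_of_adj {u v : V} (huv : G.Adj u v) (w : V) :
    G.dist u w ≤ G.dist v w + 1 := by
  rw [G.dist_comm (u := u), G.dist_comm (u := v)]
  have hstep := huv.diff_dist_adj (u := w)
  omega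

lemma geodesicNeighbors_nonempty (hconn : G.Connected) {u v : V} (huv : u ≠ v) :
    (geodesicNeighbors G u v).Nonempty := by
  obtain ⟨W, hW⟩ := hconn.exists_walk_length_eq_dist u v
  cases W with
  | nil => exact absurd rfl huv
  | @cons _ t _ hut W =>
    refine ⟨t, hut, ?_⟩
    have hstep := dist_le_dist_add_one_of_adj hut v
    have hle := dist_le W
    rw [Walk.length_cons] at hW
    omega

lemma geodesicNeighbors_eq_commonNeighbors {c a : V} (hca : G.dist c a = 2) :
    geodesicNeighbors G c a = G.commonNeighbors c a := by
  ext u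
  simp only [geodesicNeighbors, hca, Nat.reduceEqDiff, dist_eq_one_iff_adj, Set.mem_ofPred_eq,
    mem_commonNeighbors, G.adj_comm a]

lemma mem_geodesicNeighbors_of_adj (hconn : G.Connected) {c p b : V} (hcp : G.Adj c p)
    (hpb : G.Adj p b) (hb : 2 ≤ G.dist c b) : p ∈ geodesicNeighbors G c b := by
  have hle := hconn.dist_triangle (u := c) (v := p) (w := b)
  rw [dist_eq_one_iff_adj.mpr hcp, dist_eq_one_iff_adj.mpr hpb] at hle
  refine ⟨hcp, ?_⟩
  rw [dist_eq_one_iff_adj.mpr hpb]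
  omega

lemma ne_of_mem_branch {c p v a : V} (hcp : G.Adj c p) (ha : a ∈ branch G c p v) : a ≠ c := by
  rintro rfl
  rcases ha with rfl | ⟨ha, -⟩
  · exact hcp.ne rfl
  · simp at ha

lemma eq_of_mem_branch_of_adj {c p v a : V} (ha : a ∈ branch G c p v) (hca : G.Adj c a) :
    a = p := by
  refine ha.resolve_right fun ⟨h2, _⟩ ↦ ?_
  rw [dist_eq_one_iff_adj.mpr hca] at h2
  omega

lemma branch_disjoint {c p q v w : V} (hcp : G.Adj c p) (hcq : G.Adj c q) (hpq : p ≠ q)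
    (hvw : geodesicNeighbors G c v ≠ geodesicNeighbors G c w) :
    Disjoint (branch G c p v) (branch G c q w) := by
  refine Set.disjoint_left.mpr fun a ha hb ↦ ?_
  rcases ha with rfl | ⟨h2, hav⟩
  · exact hpq (eq_of_mem_branch_of_adj hb hcp)
  rcases hb with rfl | ⟨-, haw⟩
  · rw [dist_eq_one_iff_adj.mpr hcq] at h2
    omega
  · exact hvw (hav.symm.trans haw)

lemma HasFiniteCliques.exists_forall_inClosedNbhd (hfin : HasFiniteCliques G) {P : Set V}
    (hne : P.Nonempty)
    (hdom : ∀ e ∈ P, ∀ q ∈ P, ¬ InClosedNbhd G q e →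
      ∃ f ∈ P, InClosedNbhd G q f ∧ ∀ t ∈ P, InClosedNbhd G t e → InClosedNbhd G t f) :
    ∃ e ∈ P, ∀ q ∈ P, InClosedNbhd G q e := by
  let r : P → P → Prop := fun e f ↦ ∀ t ∈ P, InClosedNbhd G t e → InClosedNbhd G t f
  have hrefl : Std.Refl r := ⟨fun _ _ _ h ↦ h⟩
  have htrans : IsTrans P r := ⟨fun _ _ _ hef hfg t ht h ↦ hfg t ht (hef t ht h)⟩
  have hclique {C : Set P} (hC : IsChain r C) : G.IsClique (Set.image Subtype.val C) := by
    rintro _ ⟨e, he, rfl⟩ _ ⟨f, hf, rfl⟩ hef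
    rcases hC he hf (fun h ↦ hef (congrArg _ h)) with h | h
    · exact (h e e.2 (.inl rfl)).resolve_left hef
    · exact ((h f f.2 (.inl rfl)).resolve_left hef.symm).symm
  have hbdd (C : Set P) (hC : IsChain r C) (hCne : C.Nonempty) : ∃ m, ∀ e ∈ C, r e m := by
    have : Finite C := (hfin _ (hclique hC)).of_finite_image Subtype.val_injective.injOn
    have : Nonempty C := hCne.to_subtype
    obtain ⟨m, hm⟩ := hC.directedOn.directed_val.finite_le id
    exact ⟨m, fun e he ↦ hm ⟨e, he⟩⟩
  have := hne.to_subtype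
  obtain ⟨⟨e, he⟩, hmax⟩ := exists_maximal_of_nonempty_chains_bounded hbdd (htrans.trans _ _ _)
  refine ⟨e, he, fun q hq ↦ by_contra fun hqe ↦ ?_⟩
  obtain ⟨f, hf, hqf, hef⟩ := hdom e he q hq hqe
  exact hqe (hmax ⟨f, hf⟩ hef q hq hqf)

lemma HasFiniteCliques.exists_forall_commonNeighbors_inClosedNbhd (hfin : HasFiniteCliques G)
    (hS : ∀ w x y z : V, IsInducedC4 G w x y z → Suspended G (ExtendedSquare G w x y z))
    {c a : V} (hca : c ≠ a) (hnadj : ¬ G.Adj c a) (hne : (G.commonNeighbors c a).Nonempty) :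
    ∃ e ∈ G.commonNeighbors c a, ∀ q ∈ G.commonNeighbors c a, InClosedNbhd G q e := by
  refine hfin.exists_forall_inClosedNbhd hne fun e ⟨hce, hae⟩ q ⟨hcq, haq⟩ hqe ↦ ?_
  simp only [mem_neighborSet] at hce hae hcq haq
  obtain ⟨hne_qe, hnadj_qe⟩ := not_or.mp hqe
  have hsquare : IsInducedC4 G c e a q :=
    ⟨hce, hae.symm, haq, hcq.symm, hca, Ne.symm hne_qe, hnadj, fun h ↦ hnadj_qe h.symm⟩
  obtain ⟨f, hf⟩ := suspended_iff_exists_inClosedNbhd.mp (hS c e a q hsquare)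
  have hcf : InClosedNbhd G c f := hf c (.inr (.inl ⟨.inl rfl, .inr hce, .inr hcq⟩))
  have haf : InClosedNbhd G a f := hf a (.inr (.inr (.inr ⟨.inr hae, .inl rfl, .inr haq⟩)))
  have hqf : InClosedNbhd G q f :=
    hf q (.inr (.inr (.inl ⟨.inr hcq.symm, .inr haq.symm, .inl rfl⟩)))
  have hfc : c ≠ f := by
    rintro rfl
    exact haf.elim hca.symm fun h ↦ hnadj h.symm
  have hfa : a ≠ f := by
    rintro rfl
    exact hcf.elim hca hnadj
  exact ⟨f, ⟨hcf.resolve_left hfc, haf.resolve_left hfa⟩, hqf, fun t ⟨hct, hat⟩ hte ↦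
    hf t (.inl ⟨.inr hct.symm, hte, .inr hat.symm⟩)⟩

end Graph

namespace DistanceHereditary

variable {V : Type*} {G : SimpleGraph V}

lemma dist_add_one_add_dist_le_of_bridge (hDH : DistanceHereditary G) {p q v w : V}
    (A : G.Walk p v) (B : G.Walk q w) (hpq : G.Adj p q)
    (hdisj : ∀ a ∈ A.support, a ∉ B.support)
    (hbridge : ∀ a ∈ A.support, ∀ b ∈ B.support, G.Adj a b → a = p ∧ b = q) :
    G.dist v p + 1 + G.dist q w ≤ G.dist v w := by
  let U := A.reverse.append (Walk.cons hpq B)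
  let s : Set V := {t | t ∈ U.support}
  have hs (t : V) : t ∈ s ↔ t ∈ A.support ∨ t ∈ B.support := by
    simp only [s, U, Set.mem_ofPred_eq, Walk.mem_support_append_iff, Walk.support_reverse,
      List.mem_reverse, Walk.support_cons, List.mem_cons]
    grind [A.start_mem_support]
  have hconn : (G.induce s).Connected := U.connected_induce_support
  let vs : s := ⟨v, (hs v).mpr (.inl A.end_mem_support)⟩
  let ws : s := ⟨w, (hs w).mpr (.inr B.end_mem_support)⟩
  obtain ⟨W, hW⟩ := hconn.exists_walk_length_eq_dist vs ws
  obtain ⟨d, hd, hfst, hsnd⟩ := W.exists_boundary_dart {t | t.1 ∈ A.support}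
    A.end_mem_support fun hw ↦ hdisj w hw B.end_mem_support
  obtain ⟨hp, hq⟩ := hbridge _ hfst _ (((hs _).mp d.snd.2).resolve_left hsnd) d.adj
  have hlen := dist_add_one_add_dist_le_length_of_mem_darts W hd
  rwa [hW, hDH s hconn, hDH s hconn, hDH s hconn, hp, hq] at hlen

lemma mem_geodesicNeighbors_of_walk (hDH : DistanceHereditary G) {c u v : V} (W : G.Walk u v)
    (hcu : G.Adj c u) (hc : c ∉ W.support)
    (hW : ∀ t ∈ W.support, G.Adj c t → t = u) : u ∈ geodesicNeighbors G c v := by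
  have hle : G.dist c c + 1 + G.dist u v ≤ G.dist c v :=
    hDH.dist_add_one_add_dist_le_of_bridge Walk.nil W hcu
      (fun a ha ↦ by rwa [List.mem_singleton.mp ha])
      fun a ha b hb hab ↦ by
        obtain rfl := List.mem_singleton.mp ha
        exact ⟨rfl, hW b hb hab⟩
  have hge := dist_le_dist_add_one_of_adj hcu v
  rw [SimpleGraph.dist_self] at hle
  exact ⟨hcu, by omega⟩

lemma geodesicNeighbors_subset_of_adj (hDH : DistanceHereditary G) (hconn : G.Connected)
    {c x y : V} (hxy : G.Adj x y) (hy : 2 ≤ G.dist c y) :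
    geodesicNeighbors G c x ⊆ geodesicNeighbors G c y := by
  rintro u ⟨hcu, hux⟩
  obtain ⟨W, hW⟩ := hconn.exists_walk_length_eq_dist u x
  have hlevel {t : V} (ht : t ∈ W.support) : G.dist u t + 1 ≤ G.dist c t := by
    have hsplit := dist_add_dist_le_length_of_mem_support W ht
    have htri := hconn.dist_triangle (u := c) (v := t) (w := x)
    omega
  have hsupport {t : V} (ht : t ∈ (W.concat hxy).support) : t ∈ W.support ∨ t = y := by
    simpa only [Walk.support_concat, List.mem_append, List.mem_singleton] using ht
  refine hDH.mem_geodesicNeighbors_of_walk (W.concat hxy) hcu (fun hc ↦ ?_)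
    fun t ht hct ↦ ?_
  · rcases hsupport hc with hc | rfl
    · simpa using hlevel hc
    · simp at hy
  · have hct := dist_eq_one_iff_adj.mpr hct
    rcases hsupport ht with ht | rfl
    · have hut := hlevel ht
      exact (hconn.dist_eq_zero_iff.mp (by omega)).symm
    · omega

lemma geodesicNeighbors_eq_of_adj (hDH : DistanceHereditary G) (hconn : G.Connected)
    {c x y : V} (hxy : G.Adj x y) (hx : 2 ≤ G.dist c x) (hy : 2 ≤ G.dist c y) :
    geodesicNeighbors G c x = geodesicNeighbors G c y :=
  (hDH.geodesicNeighbors_subset_of_adj hconn hxy hy).antisymm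
    (hDH.geodesicNeighbors_subset_of_adj hconn hxy.symm hx)

lemma exists_walk_support_subset_branch (hDH : DistanceHereditary G) (hconn : G.Connected)
    {c p v : V} (hp : p ∈ geodesicNeighbors G c v) :
    ∃ W : G.Walk p v, ∀ a ∈ W.support, a ∈ branch G c p v := by
  induction hn : G.dist v p generalizing v with
  | zero =>
    obtain rfl := hconn.dist_eq_zero_iff.mp hn
    exact ⟨Walk.nil, fun a ha ↦ .inl (by simpa using ha)⟩
  | succ n ih =>
    obtain ⟨hcp, hpv⟩ := hp
    rw [G.dist_comm, hn] at hpv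
    have hv : v ∈ branch G c p v := .inr ⟨by omega, rfl⟩
    obtain ⟨t, hvt, ht⟩ := geodesicNeighbors_nonempty hconn (u := v) (v := p) (by
      rintro rfl
      simp at hn)
    by_cases htp : t = p
    · subst htp
      refine ⟨hvt.symm.toWalk, fun a ha ↦ ?_⟩
      simp only [Walk.support_cons, Walk.support_nil, List.mem_cons, List.not_mem_nil,
        or_false] at ha
      rcases ha with rfl | rfl
      exacts [.inl rfl, hv]
    have htn : G.dist t p = n := by omega
    have htpos := hconn.pos_dist_of_ne htp
    have hct : G.dist c t = n + 1 := by
      have htri := hconn.dist_triangle (u := c) (v := p) (w := t)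
      have hstep := hvt.diff_dist_adj (u := c)
      rw [dist_eq_one_iff_adj.mpr hcp, G.dist_comm (u := p)] at htri
      omega
    obtain ⟨W, hW⟩ := ih (v := t) ⟨hcp, by rw [G.dist_comm, htn, hct]⟩ htn
    have htv := hDH.geodesicNeighbors_eq_of_adj hconn (c := c) hvt.symm (by omega) (by omega)
    refine ⟨W.concat hvt.symm, fun a ha ↦ ?_⟩
    rw [Walk.support_concat, List.mem_append, List.mem_singleton] at ha
    rcases ha with ha | rfl
    · exact (hW a ha).imp_right fun ⟨h2, hat⟩ ↦ ⟨h2, hat.trans htv⟩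
    · exact hv

lemma exists_dist_eq_two_geodesicNeighbors_eq (hDH : DistanceHereditary G)
    (hconn : G.Connected) {c v : V} (hv : 2 ≤ G.dist c v) :
    ∃ a, G.dist c a = 2 ∧ geodesicNeighbors G c a = geodesicNeighbors G c v := by
  obtain ⟨p, hp⟩ := geodesicNeighbors_nonempty hconn (u := c) (v := v) (by
    rintro rfl
    simp at hv)
  obtain ⟨W, hW⟩ := hDH.exists_walk_support_subset_branch hconn hp
  have hcp := dist_eq_one_iff_adj.mpr hp.1
  cases W with
  | nil => omega
  | @cons _ a _ hpa W =>
    obtain ⟨h2, ha⟩ := (hW a (by simp)).resolve_left hpa.ne'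
    have htri := hconn.dist_triangle (u := c) (v := p) (w := a)
    rw [hcp, dist_eq_one_iff_adj.mpr hpa] at htri
    exact ⟨a, by omega, ha⟩

lemma eq_and_eq_of_adj_of_mem_branch (hDH : DistanceHereditary G) (hconn : G.Connected)
    {c p q v w a b : V}
    (hp : p ∈ geodesicNeighbors G c v \ geodesicNeighbors G c w)
    (hq : q ∈ geodesicNeighbors G c w \ geodesicNeighbors G c v)
    (ha : a ∈ branch G c p v) (hb : b ∈ branch G c q w) (hab : G.Adj a b) : a = p ∧ b = q := by
  rcases ha with rfl | ⟨ha, hav⟩ <;> rcases hb with rfl | ⟨hb, hbw⟩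
  · exact ⟨rfl, rfl⟩
  · exact absurd (hbw ▸ mem_geodesicNeighbors_of_adj hconn hp.1.1 hab hb) hp.2
  · exact absurd (hav ▸ mem_geodesicNeighbors_of_adj hconn hq.1.1 hab.symm ha) hq.2
  · have hvw := hav.symm.trans ((hDH.geodesicNeighbors_eq_of_adj hconn hab ha hb).trans hbw)
    exact absurd (hvw ▸ hp.1) hp.2

lemma dist_add_dist_le_of_not_adj (hDH : DistanceHereditary G) (hconn : G.Connected)
    {c p q v w : V} (hp : p ∈ geodesicNeighbors G c v \ geodesicNeighbors G c w)
    (hq : q ∈ geodesicNeighbors G c w \ geodesicNeighbors G c v) (hpq : ¬ G.Adj p q) :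
    G.dist c v + G.dist c w ≤ G.dist v w := by
  have hdisj : Disjoint (branch G c p v) (branch G c q w) :=
    branch_disjoint hp.1.1 hq.1.1 (fun h ↦ hp.2 (h ▸ hq.1)) fun h ↦ hp.2 (h ▸ hp.1)
  obtain ⟨A, hA⟩ := hDH.exists_walk_support_subset_branch hconn hp.1
  obtain ⟨B, hB⟩ := hDH.exists_walk_support_subset_branch hconn hq.1
  have hle := hDH.dist_add_one_add_dist_le_of_bridge A (Walk.cons hq.1.1 B) hp.1.1.symm
    (by
      intro a ha hab
      rw [Walk.support_cons, List.mem_cons] at hab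
      exact hab.elim (ne_of_mem_branch hp.1.1 (hA a ha))
        fun hb ↦ hdisj.notMem_of_mem_left (hA a ha) (hB a hb))
    (by
      intro a ha b hb hab
      rw [Walk.support_cons, List.mem_cons] at hb
      rcases hb with rfl | hb
      · exact ⟨eq_of_mem_branch_of_adj (hA a ha) hab.symm, rfl⟩
      · obtain ⟨rfl, rfl⟩ :=
          hDH.eq_and_eq_of_adj_of_mem_branch hconn hp hq (hA a ha) (hB b hb) hab
        exact absurd hab hpq)
  rwa [G.dist_comm, hp.1.2] at hle

lemma dist_add_dist_le_add_one (hDH : DistanceHereditary G) (hconn : G.Connected)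
    {c p q v w : V} (hp : p ∈ geodesicNeighbors G c v \ geodesicNeighbors G c w)
    (hq : q ∈ geodesicNeighbors G c w \ geodesicNeighbors G c v) :
    G.dist c v + G.dist c w ≤ G.dist v w + 1 := by
  by_cases hpq : G.Adj p q
  · have hdisj : Disjoint (branch G c p v) (branch G c q w) :=
      branch_disjoint hp.1.1 hq.1.1 hpq.ne fun h ↦ hp.2 (h ▸ hp.1)
    obtain ⟨A, hA⟩ := hDH.exists_walk_support_subset_branch hconn hp.1
    obtain ⟨B, hB⟩ := hDH.exists_walk_support_subset_branch hconn hq.1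
    have hle := hDH.dist_add_one_add_dist_le_of_bridge A B hpq
      (fun a ha hb ↦ hdisj.notMem_of_mem_left (hA a ha) (hB a hb))
      fun a ha b hb ↦ hDH.eq_and_eq_of_adj_of_mem_branch hconn hp hq (hA a ha) (hB b hb)
    rw [G.dist_comm, hp.1.2] at hle
    have hqw := hq.1.2
    omega
  · exact (hDH.dist_add_dist_le_of_not_adj hconn hp hq hpq).trans (Nat.le_succ _)

lemma geodesicNeighbors_subset_or_subset (hDH : DistanceHereditary G) (hconn : G.Connected)
    {c v w : V} (hvw : G.dist v w + 1 < G.dist c v + G.dist c w) :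
    geodesicNeighbors G c v ⊆ geodesicNeighbors G c w ∨
      geodesicNeighbors G c w ⊆ geodesicNeighbors G c v := by
  by_contra! h
  obtain ⟨⟨p, hp⟩, q, hq⟩ := And.intro (Set.sdiff_nonempty.mpr h.1) (Set.sdiff_nonempty.mpr h.2)
  exact (hDH.dist_add_dist_le_add_one hconn hp hq).not_gt hvw

lemma exists_forall_geodesicNeighbors_inClosedNbhd (hDH : DistanceHereditary G)
    (hconn : G.Connected) (hfin : HasFiniteCliques G)
    (hS : ∀ w x y z : V, IsInducedC4 G w x y z → Suspended G (ExtendedSquare G w x y z))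
    {c v : V} (hv : 2 ≤ G.dist c v) :
    ∃ e ∈ geodesicNeighbors G c v, ∀ q ∈ geodesicNeighbors G c v, InClosedNbhd G q e := by
  obtain ⟨a, hca, hav⟩ := hDH.exists_dist_eq_two_geodesicNeighbors_eq hconn hv
  have hne : c ≠ a := by
    rintro rfl
    simp at hca
  have hnadj : ¬ G.Adj c a := fun h ↦ by
    rw [dist_eq_one_iff_adj.mpr h] at hca
    omega
  have hcommon := geodesicNeighbors_nonempty hconn hne
  rw [geodesicNeighbors_eq_commonNeighbors hca] at hcommon
  rw [← hav, geodesicNeighbors_eq_commonNeighbors hca]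
  exact hfin.exists_forall_commonNeighbors_inClosedNbhd hS hne hnadj hcommon

lemma exists_mem_forall_mem_geodesicNeighbors (hDH : DistanceHereditary G)
    (hconn : G.Connected) (hfin : HasFiniteCliques G)
    (hS : ∀ w x y z : V, IsInducedC4 G w x y z → Suspended G (ExtendedSquare G w x y z))
    {c : V} {B : Set V} (hne : B.Nonempty) (hB : ∀ v ∈ B, 2 ≤ G.dist c v)
    (hclose : ∀ u ∈ B, ∀ v ∈ B, G.dist u v + 1 < G.dist c u + G.dist c v) :
    ∃ b ∈ B, ∃ e, (∀ v ∈ B, e ∈ geodesicNeighbors G c v) ∧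
      ∀ q ∈ geodesicNeighbors G c b, InClosedNbhd G q e := by
  have hnested (u v : B) := hDH.geodesicNeighbors_subset_or_subset hconn (hclose u u.2 v v.2)
  choose e he hdom using fun v : B ↦
    hDH.exists_forall_geodesicNeighbors_inClosedNbhd hconn hfin hS (hB v v.2)
  have hclique : G.IsClique (Set.range e) := by
    rintro _ ⟨u, rfl⟩ _ ⟨v, rfl⟩ huv
    rcases hnested u v with h | h
    · exact (hdom v _ (h (he u))).resolve_left huv
    · exact ((hdom u _ (h (he v))).resolve_left huv.symm).symm
  have := hne.to_subtype
  obtain ⟨b, hb⟩ := exists_mem_forall_mem_of_total hnested he (hfin _ hclique)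
  exact ⟨b, b.2, e b, fun v hv ↦ hb ⟨v, hv⟩, hdom b⟩

lemma dist_le_dist_of_forall_geodesicNeighbors_inClosedNbhd (hDH : DistanceHereditary G)
    (hconn : G.Connected) {b c e v : V} (he : e ∈ geodesicNeighbors G c b)
    (hdom : ∀ q ∈ geodesicNeighbors G c b, InClosedNbhd G q e) (hcv : c ≠ v)
    (hbv : G.dist b v < G.dist c b + G.dist c v) : G.dist e v ≤ G.dist c v := by
  by_contra! hfar
  have hev : e ∉ geodesicNeighbors G c v := fun h ↦ by have := h.2; omega
  obtain ⟨q, hq⟩ := geodesicNeighbors_nonempty hconn hcv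
  have hqe : ¬ InClosedNbhd G q e := by
    rintro (rfl | h)
    · exact hev hq
    · have hstep := dist_le_dist_add_one_of_adj h.symm v
      have hqv := hq.2
      omega
  have hqb : q ∉ geodesicNeighbors G c b := fun h ↦ hqe (hdom q h)
  have hle := hDH.dist_add_dist_le_of_not_adj hconn ⟨he, hev⟩ ⟨hq, hqb⟩
    fun h ↦ hqe (.inr h.symm)
  exact hle.not_gt hbv

lemma exists_forall_dist_le_of_forall_dist_le_add_one (hDH : DistanceHereditary G)
    (hconn : G.Connected) (hfin : HasFiniteCliques G)
    (hS : ∀ w x y z : V, IsInducedC4 G w x y z → Suspended G (ExtendedSquare G w x y z))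
    {S : Set V} {r : V → ℕ} (hpair : ∀ u ∈ S, ∀ v ∈ S, G.dist u v ≤ r u + r v)
    {c : V} (hc : ∀ v ∈ S, G.dist c v ≤ r v + 1) : ∃ e, ∀ v ∈ S, G.dist e v ≤ r v := by
  by_cases hzero : ∃ v ∈ S, r v = 0
  · obtain ⟨v, hv, hrv⟩ := hzero
    exact ⟨v, fun u hu ↦ by simpa only [hrv, zero_add] using hpair v hv u hu⟩
  have hpos (v : V) (hv : v ∈ S) : 0 < r v := Nat.pos_of_ne_zero fun h ↦ hzero ⟨v, hv, h⟩
  let missed : Set V := {v ∈ S | G.dist c v = r v + 1}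
  rcases missed.eq_empty_or_nonempty with hmissed | hmissed
  · refine ⟨c, fun v hv ↦ Nat.le_of_lt_succ ((hc v hv).lt_of_ne fun h ↦ ?_)⟩
    exact Set.eq_empty_iff_forall_notMem.mp hmissed v ⟨hv, h⟩
  obtain ⟨b, ⟨hbS, hcb⟩, e, he, hdom⟩ :=
    hDH.exists_mem_forall_mem_geodesicNeighbors hconn hfin hS (c := c) hmissed
      (fun v ⟨hv, hcv⟩ ↦ hcv.symm ▸ Nat.succ_le_succ (hpos v hv))
      (fun u ⟨hu, hcu⟩ v ⟨hv, hcv⟩ ↦ by have huv := hpair u hu v hv; omega)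
  have heb := he b ⟨hbS, hcb⟩
  refine ⟨e, fun v hv ↦ ?_⟩
  by_cases hcv : G.dist c v = r v + 1
  · have hev := (he v ⟨hv, hcv⟩).2
    omega
  rcases (Nat.le_of_lt_succ ((hc v hv).lt_of_ne hcv)).lt_or_eq with hlt | heq
  · exact (dist_le_dist_add_one_of_adj heb.1.symm v).trans hlt
  have hcv_ne : c ≠ v := by
    rintro rfl
    exact (hpos c hv).ne (SimpleGraph.dist_self.symm.trans heq)
  have hbv := hpair b hbS v hv
  exact (hDH.dist_le_dist_of_forall_geodesicNeighbors_inClosedNbhd hconn heb hdom hcv_ne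
    (by omega)).trans_eq heq

lemma exists_forall_dist_le_of_forall_dist_le_add (hDH : DistanceHereditary G)
    (hconn : G.Connected) (hfin : HasFiniteCliques G)
    (hS : ∀ w x y z : V, IsInducedC4 G w x y z → Suspended G (ExtendedSquare G w x y z))
    {S : Set V} {r : V → ℕ} (hpair : ∀ u ∈ S, ∀ v ∈ S, G.dist u v ≤ r u + r v)
    {c : V} {k : ℕ} (hc : ∀ v ∈ S, G.dist c v ≤ r v + k) : ∃ e, ∀ v ∈ S, G.dist e v ≤ r v := by
  induction k generalizing c with
  | zero => exact ⟨c, hc⟩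
  | succ k ih =>
    obtain ⟨e, he⟩ := hDH.exists_forall_dist_le_of_forall_dist_le_add_one hconn hfin hS
      (r := fun v ↦ r v + k) (fun u hu v hv ↦ (hpair u hu v hv).trans (by omega)) hc
    exact ih he

lemma hellyGraph_of_extendedSquares_suspended (hDH : DistanceHereditary G)
    (hconn : G.Connected) (hfin : HasFiniteCliques G)
    (hS : ∀ w x y z : V, IsInducedC4 G w x y z → Suspended G (ExtendedSquare G w x y z)) :
    HellyGraph G := by
  intro S r hmeet
  have hpair (u : V) (hu : u ∈ S) (v : V) (hv : v ∈ S) : G.dist u v ≤ r u + r v := by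
    obtain ⟨t, hut, hvt⟩ := hmeet u hu v hv
    rw [G.dist_comm] at hvt
    exact hconn.dist_triangle.trans (add_le_add hut hvt)
  rcases S.eq_empty_or_nonempty with rfl | ⟨v₀, hv₀⟩
  · obtain ⟨c⟩ := hconn.nonempty
    exact ⟨c, fun v hv ↦ hv.elim⟩
  obtain ⟨c, hc⟩ := hDH.exists_forall_dist_le_of_forall_dist_le_add hconn hfin hS hpair
    (c := v₀) (k := r v₀) fun v hv ↦ (hpair v₀ hv₀ v hv).trans (add_comm _ _).le
  exact ⟨c, fun v hv ↦ G.dist_comm.trans_le (hc v hv)⟩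

end DistanceHereditary

theorem distanceHereditary_helly_iff_extendedSquares_suspended_general
    {V : Type*} (G : SimpleGraph V) (hconn : G.Connected) (hDH : DistanceHereditary G)
    (hfin : HasFiniteCliques G) :
    HellyGraph G ↔
      ∀ w x y z : V, IsInducedC4 G w x y z → Suspended G (ExtendedSquare G w x y z) :=
  ⟨fun hHelly w x y z _ ↦ hHelly.suspended_extendedSquare hconn w x y z,
    hDH.hellyGraph_of_extendedSquares_suspended hconn hfin⟩

/-- A distance-hereditary graph is Helly iff the extended square of every induced 4-cycle
is suspended. -/
theorem distanceHereditary_helly_iff_extendedSquares_suspended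
    {V : Type*} [Fintype V] (G : SimpleGraph V) (hconn : G.Connected)
    (hDH : DistanceHereditary G) :
    HellyGraph G ↔
      ∀ w x y z : V, IsInducedC4 G w x y z → Suspended G (ExtendedSquare G w x y z) :=
  distanceHereditary_helly_iff_extendedSquares_suspended_general G hconn hDH fun s _ ↦ s.toFinite
end

section
/- For every distance-hereditary graph G there exists a distance-hereditary Helly graph H such that G is an isometric subgraph of H, H has at most 2·|V(G)| vertices, and H has at most 4·|E(G)| edges. -/
open SimpleGraph

/-!
By Bandelt and Mulder, a distance-hereditary graph is built from a single vertex by adding pendant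
vertices and twins, and its hull `H` can be extended along the way. A pendant vertex or a true twin
of a vertex of `H` preserves the Helly property, since the unions of disks centred in the
neighbourhood of the new vertex are disks. For a false twin of `u` the neighbourhood of `u` itself
must also behave like a disk, which holds if some neighbour of `u` is adjacent to all others. If
there is none, first a true twin of `u`, its shadow, is added to `H`; it is such a neighbour of `u`
in the enlarged hull. So each vertex of the graph accounts for at most two vertices of `H`. A vertex
of degree `d` has degree at most `2d` in `H`, and at most `2d - 1` if it still lacks such a
neighbour. Hence adding a false twin to it, with `d` new edges in the graph, costs at most
`2 * (2d - 1 + 1) = 4d` edges in `H`.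
-/

universe u v

variable {V : Type u} {W : Type v} {G : SimpleGraph V} {H : SimpleGraph W}

section Distance

theorem dist_le_dist_add_one_of_adj_s14 {x y : V} (h : G.Adj x y) (r : V) :
    G.dist x r ≤ G.dist y r + 1 := by
  have := h.reachable.dist_triangle_left r
  rw [dist_eq_one_iff_adj.2 h] at this
  omega

theorem exists_adj_dist_add_one_eq {x r : V} (h : G.Reachable x r) (hne : x ≠ r) :
    ∃ y, G.Adj x y ∧ G.dist y r + 1 = G.dist x r := by
  obtain ⟨p, hp⟩ := h.exists_walk_length_eq_dist
  cases p with
  | nil => exact absurd rfl hne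
  | @cons _ y _ hxy p =>
    refine ⟨y, hxy, ?_⟩
    have := dist_le p
    have := dist_le_dist_add_one_of_adj_s14 hxy r
    rw [Walk.length_cons] at hp
    omega

theorem exists_walk_forall_dist_lt {r : V} {x : V} (h : G.Reachable x r) :
    ∃ p : G.Walk x r, ∀ w ∈ p.support, w = x ∨ G.dist w r < G.dist x r := by
  induction hn : G.dist x r generalizing x with
  | zero =>
    obtain rfl := h.dist_eq_zero_iff.1 hn
    exact ⟨.nil, by simp⟩
  | succ n ih =>
    have hne : x ≠ r := by rintro rfl; simp at hn
    obtain ⟨y, hxy, hy⟩ := exists_adj_dist_add_one_eq h hne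
    obtain ⟨p, hp⟩ := ih (hxy.reachable.symm.trans h) (by omega)
    refine ⟨.cons hxy p, fun w hw => ?_⟩
    rcases List.mem_cons.1 hw with rfl | hw
    · exact .inl rfl
    · rcases hp w hw with rfl | hlt
      · exact .inr (by omega)
      · exact .inr (by omega)

end Distance

/-- A map of graphs sending every edge to an edge or to a single vertex, i.e. a homomorphism
between the reflexive closures. Retractions of a graph onto a subgraph are of this kind. -/
def IsContraction (G : SimpleGraph V) (H : SimpleGraph W) (f : V → W) : Prop :=
  ∀ ⦃x y⦄, G.Adj x y → H.Adj (f x) (f y) ∨ f x = f y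

namespace IsContraction

variable {f : V → W}

theorem of_hom (f : G →g H) : IsContraction G H f := fun _ _ h => .inl (f.map_adj h)

theorem exists_walk (hf : IsContraction G H f) {x y : V} (p : G.Walk x y) :
    ∃ q : H.Walk (f x) (f y), q.support ⊆ p.support.map f ∧ q.length ≤ p.length := by
  induction p with
  | nil => exact ⟨.nil, by simp, le_rfl⟩
  | @cons x y z hxy p ih =>
    obtain ⟨q, hqs, hql⟩ := ih
    rcases hf hxy with h | h
    · exact ⟨.cons h q, by simpa using List.subset_cons_of_subset _ hqs, by simpa using hql⟩
    · exact ⟨q.copy h.symm rfl, by simpa using List.subset_cons_of_subset _ hqs,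
        by simpa using hql.trans (Nat.le_succ _)⟩

theorem reachable (hf : IsContraction G H f) {x y : V} (h : G.Reachable x y) :
    H.Reachable (f x) (f y) := by
  obtain ⟨p⟩ := h
  obtain ⟨q, -⟩ := hf.exists_walk p
  exact ⟨q⟩

theorem dist_le (hf : IsContraction G H f) {x y : V} (h : G.Reachable x y) :
    H.dist (f x) (f y) ≤ G.dist x y := by
  obtain ⟨p, hp⟩ := h.exists_walk_length_eq_dist
  obtain ⟨q, -, hq⟩ := hf.exists_walk p
  exact (SimpleGraph.dist_le q).trans (hq.trans hp.le)

theorem connected (hf : IsContraction G H f) (hsurj : f.Surjective) (hG : G.Connected) :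
    H.Connected where
  preconnected a b := by
    obtain ⟨x, rfl⟩ := hsurj a
    obtain ⟨y, rfl⟩ := hsurj b
    exact hf.reachable (hG x y)
  nonempty := hG.nonempty.map f

end IsContraction

theorem dist_map_iso (e : G ≃g H) (a b : V) : H.dist (e a) (e b) = G.dist a b := by
  by_cases h : G.Reachable a b
  · have hle := (IsContraction.of_hom e.toHom).dist_le h
    have hge := (IsContraction.of_hom e.symm.toHom).dist_le (e.reachable_iff.2 h)
    exact le_antisymm hle (by simpa using hge)
  · rw [dist_eq_zero_of_not_reachable h, dist_eq_zero_of_not_reachable (mt e.reachable_iff.1 h)]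

theorem HellyGraph.of_iso (hG : HellyGraph G) (e : G ≃g H) : HellyGraph H := by
  intro S r hS
  obtain ⟨c, hc⟩ := hG (e ⁻¹' S) (r ∘ e) fun u hu v hv => by
    obtain ⟨w, hw⟩ := hS _ hu _ hv
    obtain ⟨w, rfl⟩ := e.surjective w
    exact ⟨w, by simpa only [dist_map_iso, Function.comp_apply] using hw⟩
  refine ⟨e c, fun v hv => ?_⟩
  obtain ⟨v, rfl⟩ := e.surjective v
  simpa only [dist_map_iso, Function.comp_apply] using hc v hv

/-! ### Distance-hereditary graphs -/

section Blowup

variable {f : V → W}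

theorem exists_walk_lift (hadj : ∀ x y, f x ≠ f y → (G.Adj x y ↔ H.Adj (f x) (f y))) (T : Set V)
    {x y : V} (hx : x ∈ T) (hy : y ∈ T) (hxy : f x ≠ f y) (q : H.Walk (f x) (f y))
    (hq : ∀ w ∈ q.support, w ∈ f '' T) :
    ∃ p : G.Walk x y, (∀ w ∈ p.support, w ∈ T) ∧ p.length ≤ q.length := by
  have lift_edge : ∀ {x y}, H.Adj (f x) (f y) → G.Adj x y := fun h => (hadj _ _ h.ne).2 h
  generalize ha : f x = a at q
  generalize hb : f y = b at q
  induction q generalizing x with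
  | nil => exact absurd (ha.trans hb.symm) hxy
  | @cons a c b hac q ih =>
    obtain ⟨t, ht, rfl⟩ := hq c (by simp)
    subst ha hb
    by_cases hty : f t = f y
    · exact ⟨.cons (lift_edge (hty ▸ hac)) .nil, by simp [hx, hy], by simp⟩
    · obtain ⟨p, hps, hpl⟩ := ih ht hty rfl rfl fun w hw => hq w (by simp [hw])
      exact ⟨.cons (lift_edge hac) p, by simpa [hx] using hps, by simpa using hpl⟩

end Blowup

namespace DistanceHereditary

theorem exists_geodesic (hG : DistanceHereditary G) {a b : V} (p : G.Walk a b) :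
    ∃ q : G.Walk a b, q.support ⊆ p.support ∧ q.length = G.dist a b := by
  have hp := p.connected_induce_support
  let incl := Embedding.induce (G := G) {w | w ∈ p.support}
  obtain ⟨q, hq⟩ := hp.exists_walk_length_eq_dist ⟨a, p.start_mem_support⟩ ⟨b, p.end_mem_support⟩
  refine ⟨q.map incl.toHom, ?_, (Walk.length_map _ _).trans (hq.trans (hG _ hp _ _))⟩
  intro w hw
  obtain ⟨z, -, rfl⟩ := List.mem_map.1 (Walk.support_map _ q ▸ hw)
  exact z.2

theorem of_exists_geodesic
    (h : ∀ ⦃a b⦄ (p : G.Walk a b), ∃ q : G.Walk a b,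
      q.support ⊆ p.support ∧ q.length ≤ G.dist a b) :
    DistanceHereditary G := by
  intro s hs a b
  refine le_antisymm ?_ ((IsContraction.of_hom (Embedding.induce s).toHom).dist_le (hs a b))
  obtain ⟨p⟩ := hs a b
  obtain ⟨q, hqs, hql⟩ := h (p.map (Embedding.induce s).toHom)
  have hq : ∀ w ∈ q.support, w ∈ s := fun w hw => by
    obtain ⟨z, -, rfl⟩ := List.mem_map.1 (Walk.support_map _ p ▸ hqs hw)
    exact z.2
  calc (G.induce s).dist a b ≤ (q.induce s hq).length := dist_le _
    _ = q.length := by rw [← Walk.length_map (Embedding.induce s).toHom, Walk.map_induce]; rfl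
    _ ≤ G.dist a b := hql

/-- Substituting cliques and independent sets for the vertices of a distance-hereditary graph
preserves the property. Geodesics between distinct fibres are lifted from the quotient; inside an
independent fibre, the second vertex of a walk is a common neighbour of its ends. -/
theorem of_blowup (hH : DistanceHereditary H) (f : V → W)
    (hadj : ∀ x y, f x ≠ f y → (G.Adj x y ↔ H.Adj (f x) (f y)))
    (hfib : ∀ x y w, f x = f y → f x = f w → x ≠ y → G.Adj x w → G.Adj x y) :
    DistanceHereditary G := by
  have hf : IsContraction G H f := fun x y hxy => by
    rw [or_iff_not_imp_right]
    exact fun hne => (hadj x y hne).1 hxy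
  refine of_exists_geodesic fun x y p => ?_
  by_cases hxy : f x = f y
  · cases p with
    | nil => exact ⟨.nil, by simp, by simp⟩
    | @cons _ w _ hxw p =>
      by_cases hne : x = y
      · subst hne
        exact ⟨.nil, by simp, by simp⟩
      by_cases hadj_xy : G.Adj x y
      · exact ⟨.cons hadj_xy .nil, by simp, by simp [dist_eq_one_iff_adj.2 hadj_xy]⟩
      have hfw : f w ≠ f x := fun h => hadj_xy (hfib x y w hxy h.symm hne hxw)
      have hwy : G.Adj w y :=
        (hadj w y (hxy ▸ hfw)).2 (hxy ▸ ((hadj x w hfw.symm).1 hxw).symm)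
      have hdist := (Walk.cons hxw p).reachable.one_lt_dist_of_ne_of_not_adj hne hadj_xy
      exact ⟨.cons hxw (.cons hwy .nil), by simp, hdist⟩
  · obtain ⟨q, hqs, -⟩ := hf.exists_walk p
    obtain ⟨g, hgs, hgl⟩ := hH.exists_geodesic q
    obtain ⟨l, hls, hll⟩ := exists_walk_lift hadj {w | w ∈ p.support} p.start_mem_support
      p.end_mem_support hxy g fun w hw => by simpa using hqs (hgs hw)
    exact ⟨l, hls, hll.trans (hgl.le.trans (hf.dist_le p.reachable))⟩

theorem of_embedding (hH : DistanceHereditary H) (φ : G ↪g H) : DistanceHereditary G :=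
  hH.of_blowup φ (fun _ _ _ => φ.map_adj_iff.symm)
    fun _ _ _ hxy _ hne => absurd (φ.injective hxy) hne

theorem dist_map_embedding (hH : DistanceHereditary H) (hG : G.Connected) (φ : G ↪g H) (a b : V) :
    H.dist (φ a) (φ b) = G.dist a b := by
  have hφ := IsContraction.of_hom φ.toHom
  refine le_antisymm (hφ.dist_le (hG a b)) ?_
  rcases eq_or_ne a b with rfl | hab
  · simp
  obtain ⟨p⟩ := hG a b
  obtain ⟨q, hqs, hql⟩ := hH.exists_geodesic (p.map φ.toHom)
  obtain ⟨l, -, hl⟩ := exists_walk_lift (f := φ) (fun _ _ _ => φ.map_adj_iff.symm) Set.univ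
    trivial trivial (φ.injective.ne hab) q fun w hw => by
      obtain ⟨z, -, rfl⟩ := List.mem_map.1 (Walk.support_map _ p ▸ hqs hw)
      exact ⟨z, trivial, rfl⟩
  exact (dist_le l).trans (hl.trans hql.le)

theorem dist_add_one_le_of_walk (hG : DistanceHereditary G) {x y z : V} (p : G.Walk x z)
    (hyx : G.Adj y x) (hyz : y ≠ z) (hp : ∀ w ∈ p.support, G.Adj y w → w = x) :
    G.dist x z + 1 ≤ G.dist y z := by
  obtain ⟨q, hqs, hql⟩ := hG.exists_geodesic (.cons hyx p)
  cases q with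
  | nil => exact absurd rfl hyz
  | @cons _ w _ hyw q =>
    have hw : w ∈ (Walk.cons hyx p).support := hqs (by simp)
    obtain rfl : w = x := hp w ((List.mem_cons.1 hw).resolve_left hyw.ne') hyw
    rw [← hql, Walk.length_cons]
    exact Nat.succ_le_succ (dist_le q)

theorem adj_of_walk (hG : DistanceHereditary G) {v a b z : V} (p : G.Walk b z) (hva : G.Adj v a)
    (hvb : G.Adj v b) (hza : G.Adj z a) (hvz : v ≠ z) (hbz : b ≠ z)
    (hp : ∀ w ∈ p.support, G.Adj v w → w = b) : G.Adj z b := by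
  have hle := hG.dist_add_one_le_of_walk p hvb hvz hp
  have hvz2 : G.dist v z ≤ 2 := dist_le (.cons hva (.cons hza.symm .nil))
  have hpos := p.reachable.pos_dist_of_ne hbz
  exact (dist_eq_one_iff_adj.1 (by omega)).symm

end DistanceHereditary

/-! ### Adding a vertex -/

/-- The graph obtained from `H` by adding a new vertex `none` with neighbourhood `N`. -/
def addVertex (H : SimpleGraph W) (N : Set W) : SimpleGraph (Option W) where
  Adj
    | none, none => False
    | none, some b => b ∈ N
    | some a, none => a ∈ N
    | some a, some b => H.Adj a b
  symm := ⟨by rintro (_ | a) (_ | b) h; exacts [h, h, h, h.symm]⟩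
  loopless := ⟨by rintro (_ | a) h; exacts [h, h.ne rfl]⟩

/-- The extension of `H` by a vertex adjacent to `u` only. -/
def pendant (H : SimpleGraph W) (u : W) : SimpleGraph (Option W) := addVertex H {u}

/-- The extension of `H` by a vertex adjacent to `u` and with the same other neighbours as `u`. -/
def trueTwin (H : SimpleGraph W) (u : W) : SimpleGraph (Option W) :=
  addVertex H (insert u (H.neighborSet u))

/-- The extension of `H` by a vertex nonadjacent to `u` and with the same neighbours as `u`. -/
def falseTwin (H : SimpleGraph W) (u : W) : SimpleGraph (Option W) := addVertex H (H.neighborSet u)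

/-- The vertex `z` belongs to `N` and is adjacent to all other vertices of `N`. -/
def IsUniversal (H : SimpleGraph W) (N : Set W) (z : W) : Prop := z ∈ N ∧ ∀ x ∈ N, x = z ∨ H.Adj z x

theorem isUniversal_singleton (u : W) : IsUniversal H {u} u := ⟨rfl, fun _ h => .inl h⟩

theorem isUniversal_insert_neighborSet (u : W) :
    IsUniversal H (insert u (H.neighborSet u)) u := ⟨.inl rfl, fun _ h => h⟩

section AddVertex

variable {N : Set W} {a b : W}

@[simp] theorem addVertex_adj_none_some : (addVertex H N).Adj none (some b) ↔ b ∈ N := Iff.rfl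

@[simp] theorem addVertex_adj_some_none : (addVertex H N).Adj (some a) none ↔ a ∈ N := Iff.rfl

@[simp] theorem addVertex_adj_some_some :
    (addVertex H N).Adj (some a) (some b) ↔ H.Adj a b := Iff.rfl

theorem isContraction_some : IsContraction H (addVertex H N) some := fun _ _ h => .inl h

theorem isContraction_getD {z : W} (hz : ∀ x ∈ N, x = z ∨ H.Adj z x) :
    IsContraction (addVertex H N) H (·.getD z) := by
  rintro (_ | x) (_ | y) h
  · exact absurd rfl h.ne
  · exact (hz y h).elim (fun e => .inr e.symm) .inl
  · exact (hz x h).elim .inr fun e => .inl e.symm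
  · exact .inl h

theorem IsUniversal.isContraction_getD {z : W} (hz : IsUniversal H N z) :
    IsContraction (addVertex H N) H (·.getD z) := _root_.isContraction_getD hz.2

theorem connected_addVertex (hH : H.Connected) (hN : N.Nonempty) : (addVertex H N).Connected := by
  obtain ⟨c, hc⟩ := hN
  refine connected_iff_exists_forall_reachable _ |>.2 ⟨some c, ?_⟩
  rintro (_ | x)
  · exact (addVertex_adj_some_none.2 hc).reachable
  · exact isContraction_some.reachable (hH c x)

theorem dist_some_some {z : W} (hH : H.Connected) (hz : IsUniversal H N z) (a b : W) :
    (addVertex H N).dist (some a) (some b) = H.dist a b :=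
  le_antisymm (isContraction_some.dist_le (hH a b))
    (hz.isContraction_getD.dist_le (connected_addVertex hH ⟨z, hz.1⟩ (some a) (some b)))

theorem exists_dist_add_one_eq {z : W} (hH : H.Connected) (hz : IsUniversal H N z) (a : W) :
    ∃ x ∈ N, H.dist x a + 1 = (addVertex H N).dist none (some a) := by
  obtain ⟨_ | x, hx, hdist⟩ := exists_adj_dist_add_one_eq
    (connected_addVertex hH ⟨z, hz.1⟩ none (some a)) (Option.some_ne_none a).symm
  · exact absurd rfl hx.ne
  · exact ⟨x, hx, by rwa [dist_some_some hH hz] at hdist⟩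

theorem dist_none_some_le {z x : W} (hH : H.Connected) (hz : IsUniversal H N z) (hx : x ∈ N)
    (a : W) : (addVertex H N).dist none (some a) ≤ H.dist x a + 1 := by
  rw [← dist_some_some hH hz x a]
  exact dist_le_dist_add_one_of_adj_s14 (addVertex_adj_none_some.2 hx) _

end AddVertex

/-! ### Pendant vertices and twins preserve distance-heredity -/

theorem exists_some_mem_support {N : Set W} {a : W} {y : Option W}
    (p : (addVertex H N).Walk (some a) y) (hp : none ∈ p.support) :
    ∃ x ∈ N, some x ∈ p.support := by
  classical
  let q := p.takeUntil none hp
  have hadj := q.adj_penultimate (q.not_nil_of_ne (Option.some_ne_none a))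
  have hmem := p.support_takeUntil_subset_support hp (q.getVert_mem_support (q.length - 1))
  change q.penultimate ∈ p.support at hmem
  generalize q.penultimate = w at hadj hmem
  cases w with
  | none => exact absurd rfl hadj.ne
  | some x => exact ⟨x, hadj, hmem⟩

theorem not_adj_falseTwin_of_getD_eq {u : W} {x y : Option W} (hxy : x.getD u = y.getD u) :
    ¬(falseTwin H u).Adj x y := by
  rcases x with _ | x <;> rcases y with _ | y
  · exact fun h => h.ne rfl
  · exact fun h : H.Adj u y => h.ne hxy
  · exact fun h : H.Adj u x => h.ne hxy.symm
  · exact fun h : H.Adj x y => h.ne hxy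

namespace DistanceHereditary

theorem exists_geodesic_pendant_some (hH : DistanceHereditary H) {u a b : W}
    (p : (pendant H u).Walk (some a) (some b)) :
    ∃ q : (pendant H u).Walk (some a) (some b),
      q.support ⊆ p.support ∧ q.length = H.dist a b := by
  obtain ⟨q, hqs, -⟩ := (isUniversal_singleton u).isContraction_getD.exists_walk p
  obtain ⟨g, hgs, hgl⟩ := hH.exists_geodesic q
  let incl : H →g pendant H u := ⟨some, id⟩
  refine ⟨g.map incl, fun w hw => ?_, (Walk.length_map _ _).trans hgl⟩
  obtain ⟨x, hx, rfl⟩ := List.mem_map.1 (Walk.support_map _ g ▸ hw)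
  obtain ⟨_ | y, hy, rfl⟩ := List.mem_map.1 (hqs (hgs hx))
  · obtain ⟨_, rfl, hu⟩ := exists_some_mem_support p hy
    exact hu
  · exact hy

theorem exists_geodesic_pendant_none (hH : DistanceHereditary H) (hc : H.Connected) {u : W} :
    ∀ {y} (p : (pendant H u).Walk none y),
      ∃ q : (pendant H u).Walk none y,
        q.support ⊆ p.support ∧ q.length ≤ (pendant H u).dist none y
  | none, _ => ⟨.nil, by simp, by simp⟩
  | some b, .cons (v := none) h _ => absurd rfl h.ne
  | some b, .cons (v := some x) hu p => by
    have hxu : x = u := hu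
    subst hxu
    obtain ⟨q, hqs, hql⟩ := hH.exists_geodesic_pendant_some p
    obtain ⟨_, rfl, hdist⟩ := exists_dist_add_one_eq hc (isUniversal_singleton x) b
    refine ⟨.cons hu q, List.cons_subset_cons _ hqs, ?_⟩
    rw [Walk.length_cons, hql]
    exact hdist.le

theorem pendant (hH : DistanceHereditary H) (hc : H.Connected) (u : W) :
    DistanceHereditary (pendant H u) := by
  refine of_exists_geodesic ?_
  rintro (_ | a) (_ | b) p
  · exact hH.exists_geodesic_pendant_none hc p
  · exact hH.exists_geodesic_pendant_none hc p
  · obtain ⟨q, hqs, hql⟩ := hH.exists_geodesic_pendant_none hc p.reverse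
    exact ⟨q.reverse, by simpa using hqs, by rwa [Walk.length_reverse, dist_comm]⟩
  · obtain ⟨q, hqs, hql⟩ := hH.exists_geodesic_pendant_some p
    exact ⟨q, hqs, (hql.trans (dist_some_some hc (isUniversal_singleton u) a b).symm).le⟩

theorem trueTwin (hH : DistanceHereditary H) (u : W) : DistanceHereditary (trueTwin H u) := by
  refine hH.of_blowup (·.getD u) ?_ ?_
  · rintro (_ | x) (_ | y) hne
    · exact absurd rfl hne
    · exact or_iff_right (Ne.symm hne)
    · exact (or_iff_right hne).trans (H.adj_comm u x)
    · exact Iff.rfl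
  · rintro (_ | x) (_ | y) w hxy - hne -
    · exact absurd rfl hne
    · exact .inl hxy.symm
    · exact .inl hxy
    · exact absurd (congrArg some hxy) hne

theorem falseTwin (hH : DistanceHereditary H) (u : W) : DistanceHereditary (falseTwin H u) := by
  refine hH.of_blowup (·.getD u) ?_ ?_
  · rintro (_ | x) (_ | y) hne
    · exact absurd rfl hne
    · exact Iff.rfl
    · exact H.adj_comm u x
    · exact Iff.rfl
  · exact fun x y w _ hxw _ hadj => absurd hadj (not_adj_falseTwin_of_getD_eq hxw)

end DistanceHereditary

/-! ### Extensions preserving the Helly property -/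

theorem HellyGraph.exists_forall_dist_le_s14 (hH : HellyGraph H) {ι : Type*} (c : ι → W) (r : ι → ℕ)
    (h : ∀ i j, ∃ w, H.dist (c i) w ≤ r i ∧ H.dist (c j) w ≤ r j) :
    ∃ w, ∀ i, H.dist (c i) w ≤ r i := by
  let radius (v : W) : ℕ := sInf (r '' {i | c i = v})
  have radius_mem (i : ι) : ∃ j, c j = c i ∧ r j = radius (c i) :=
    Nat.sInf_mem (Set.Nonempty.image r (s := {j | c j = c i}) ⟨i, rfl⟩)
  obtain ⟨w, hw⟩ := hH (Set.range c) radius <| by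
    rintro _ ⟨i, rfl⟩ _ ⟨j, rfl⟩
    obtain ⟨i', hi, hri⟩ := radius_mem i
    obtain ⟨j', hj, hrj⟩ := radius_mem j
    rw [← hi, ← hj] at *
    rw [← hri, ← hrj]
    exact h i' j'
  exact ⟨w, fun i => (hw _ ⟨i, rfl⟩).trans (Nat.sInf_le ⟨i, rfl, rfl⟩)⟩

/-- A vertex set that behaves like a disk for the Helly property: it shares a vertex with every
family of pairwise intersecting disks all of which it meets. -/
def DiskLike (H : SimpleGraph W) (N : Set W) : Prop :=
  ∀ (S : Set W) (r : W → ℕ),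
    (∀ u ∈ S, ∀ v ∈ S, ∃ w, H.dist u w ≤ r u ∧ H.dist v w ≤ r v) →
    (∀ u ∈ S, ∃ w ∈ N, H.dist u w ≤ r u) →
    ∃ c ∈ N, ∀ v ∈ S, H.dist v c ≤ r v

/-- The union of the disks of radius `R` centred in `N`. -/
def diskUnion (H : SimpleGraph W) (N : Set W) (R : ℕ) : Set W := {a | ∃ x ∈ N, H.dist x a ≤ R}

/-- The neighbours of `x` are all contained in the closed neighbourhood of one of them. -/
def IsDominated (H : SimpleGraph W) (x : W) : Prop := ∃ z, IsUniversal H (H.neighborSet x) z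

theorem HellyGraph.diskLike_disk (hH : HellyGraph H) (u : W) (R : ℕ) :
    DiskLike H {a | H.dist u a ≤ R} := by
  intro S r hpair hmeet
  obtain ⟨c, hc⟩ := hH.exists_forall_dist_le_s14 (ι := Option S) (fun i => i.elim u (↑))
    (fun i => i.elim R (fun v => r v)) <| by
      rintro (_ | ⟨v, hv⟩) (_ | ⟨w, hw⟩)
      · exact ⟨u, by simp⟩
      · exact hmeet w hw
      · exact (hmeet v hv).imp fun _ => And.symm
      · exact hpair v hv w hw
  exact ⟨c, hc none, fun v hv => hc (some ⟨v, hv⟩)⟩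

theorem IsUniversal.dist_le_of_ne {u z a : W} (hz : IsUniversal H (H.neighborSet u) z)
    (hu : H.Reachable u a) (hne : a ≠ u) : H.dist a z ≤ H.dist a u := by
  obtain ⟨w, huw, hw⟩ := exists_adj_dist_add_one_eq hu hne.symm
  rw [dist_comm, dist_comm (u := a), ← hw]
  rcases hz.2 w huw with rfl | hzw
  · exact Nat.le_succ _
  · exact dist_le_dist_add_one_of_adj_s14 hzw a

theorem HellyGraph.diskLike_neighborSet (hH : HellyGraph H) (hc : H.Connected) {u : W}
    (hu : IsDominated H u) : DiskLike H (H.neighborSet u) := by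
  obtain ⟨z, hz⟩ := hu
  intro S r hpair hmeet
  obtain ⟨c, hcu, hcS⟩ := hH.diskLike_disk u 1 S r hpair fun v hv =>
    (hmeet v hv).imp fun w hw => ⟨(dist_eq_one_iff_adj.2 hw.1).le, hw.2⟩
  rcases eq_or_ne c u with rfl | hne
  · refine ⟨z, hz.1, fun v hv => ?_⟩
    rcases eq_or_ne v c with rfl | hvc
    · obtain ⟨w, hw, hdist⟩ := hmeet v hv
      rwa [dist_eq_one_iff_adj.2 hz.1, ← dist_eq_one_iff_adj.2 hw]
    · exact (hz.dist_le_of_ne (hc c v) hvc).trans (hcS v hv)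
  · have hpos := hc.pos_dist_of_ne hne.symm
    exact ⟨c, dist_eq_one_iff_adj.1 (le_antisymm hcu hpos), hcS⟩

section

variable {N : Set W} {z : W}

theorem dist_none_some_le_iff (hc : H.Connected) (hz : IsUniversal H N z) {a : W} {R : ℕ} :
    (addVertex H N).dist none (some a) ≤ R + 1 ↔ a ∈ diskUnion H N R := by
  constructor
  · obtain ⟨x, hx, hdist⟩ := exists_dist_add_one_eq hc hz a
    exact fun h => ⟨x, hx, by omega⟩
  · rintro ⟨x, hx, hdist⟩
    exact (dist_none_some_le hc hz hx a).trans (by omega)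

theorem HellyGraph.addVertex (hH : HellyGraph H) (hc : H.Connected) (hz : IsUniversal H N z)
    (hN : ∀ R, DiskLike H (diskUnion H N R)) : HellyGraph (addVertex H N) := by
  have hc' := connected_addVertex hc ⟨z, hz.1⟩
  intro S r hS
  have hpair : ∀ u ∈ some ⁻¹' S, ∀ v ∈ some ⁻¹' S,
      ∃ w, H.dist u w ≤ r (some u) ∧ H.dist v w ≤ r (some v) := fun u hu v hv => by
    obtain ⟨w, huw, hvw⟩ := hS _ hu _ hv
    exact ⟨w.getD z, (hz.isContraction_getD.dist_le (hc' (some u) w)).trans huw,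
      (hz.isContraction_getD.dist_le (hc' (some v) w)).trans hvw⟩
  by_cases hnone : none ∈ S
  · rcases hr : r none with _ | R
    · refine ⟨none, fun v hv => ?_⟩
      obtain ⟨w, hw, hvw⟩ := hS none hnone v hv
      obtain rfl := hc'.dist_eq_zero_iff.1 (Nat.le_zero.1 (hr ▸ hw))
      exact hvw
    · obtain ⟨c, hcN, hcS⟩ := hN R (some ⁻¹' S) (r ∘ some) hpair fun a ha => by
        obtain ⟨_ | w, hw, haw⟩ := hS none hnone (some a) ha
        · obtain ⟨x, hx, hdist⟩ := exists_dist_add_one_eq hc hz a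
          rw [dist_comm, ← hdist, dist_comm] at haw
          exact ⟨x, ⟨x, hx, by simp⟩, (Nat.le_succ _).trans haw⟩
        · rw [hr, dist_none_some_le_iff hc hz] at hw
          exact ⟨w, hw, (dist_some_some hc hz a w).symm.le.trans haw⟩
      refine ⟨some c, ?_⟩
      rintro (_ | v) hv
      · rwa [hr, dist_none_some_le_iff hc hz]
      · exact (dist_some_some hc hz v c).trans_le (hcS v hv)
  · obtain ⟨c, hcS⟩ := hH _ (r ∘ some) hpair
    refine ⟨some c, ?_⟩
    rintro (_ | v) hv
    · exact absurd hv hnone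
    · exact (dist_some_some hc hz v c).trans_le (hcS v hv)

end

theorem HellyGraph.pendant (hH : HellyGraph H) (hc : H.Connected) (u : W) :
    HellyGraph (pendant H u) :=
  hH.addVertex hc (isUniversal_singleton u) fun R => by
    simpa only [diskUnion, Set.mem_singleton_iff, exists_eq_left] using hH.diskLike_disk u R

theorem diskUnion_insert_neighborSet (hc : H.Connected) (u : W) (R : ℕ) :
    diskUnion H (insert u (H.neighborSet u)) R = {a | H.dist u a ≤ R + 1} := by
  ext a
  constructor
  · rintro ⟨x, rfl | hx, hxa⟩
    · exact hxa.trans (Nat.le_succ R)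
    · exact (dist_le_dist_add_one_of_adj_s14 hx a).trans (Nat.succ_le_succ hxa)
  · intro (ha : H.dist u a ≤ R + 1)
    rcases eq_or_ne u a with rfl | hne
    · exact ⟨u, .inl rfl, by simp⟩
    · obtain ⟨x, hx, hdist⟩ := exists_adj_dist_add_one_eq (hc u a) hne
      exact ⟨x, .inr hx, by omega⟩

theorem diskUnion_neighborSet_succ (hc : H.Connected) {u : W} (hu : (H.neighborSet u).Nonempty)
    (R : ℕ) : diskUnion H (H.neighborSet u) (R + 1) = {a | H.dist u a ≤ R + 2} := by
  ext a
  constructor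
  · exact fun ⟨x, hx, hxa⟩ => (dist_le_dist_add_one_of_adj_s14 hx a).trans (Nat.succ_le_succ hxa)
  · intro (ha : H.dist u a ≤ R + 2)
    rcases eq_or_ne u a with rfl | hne
    · exact hu.imp fun x hx => ⟨hx, by rw [dist_eq_one_iff_adj.2 hx.symm]; omega⟩
    · obtain ⟨x, hx, hdist⟩ := exists_adj_dist_add_one_eq (hc u a) hne
      exact ⟨x, hx, by omega⟩

theorem diskUnion_zero (hc : H.Connected) (N : Set W) : diskUnion H N 0 = N := by
  ext a
  simp only [diskUnion, Nat.le_zero, hc.dist_eq_zero_iff, Set.mem_ofPred_eq, exists_eq_right]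

theorem HellyGraph.trueTwin (hH : HellyGraph H) (hc : H.Connected) (u : W) :
    HellyGraph (trueTwin H u) :=
  hH.addVertex hc (isUniversal_insert_neighborSet u) fun R =>
    diskUnion_insert_neighborSet hc u R ▸ hH.diskLike_disk u (R + 1)

theorem HellyGraph.falseTwin (hH : HellyGraph H) (hc : H.Connected) {u : W}
    (hu : IsDominated H u) : HellyGraph (falseTwin H u) := by
  obtain ⟨z, hz⟩ := id hu
  refine hH.addVertex hc hz ?_
  rintro (_ | R)
  · exact (diskUnion_zero hc _).symm ▸ hH.diskLike_neighborSet hc hu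
  · exact diskUnion_neighborSet_succ hc ⟨z, hz.1⟩ R ▸ hH.diskLike_disk u (R + 2)

/-! ### Modules and twins -/

/-- Vertices outside `M` do not distinguish the vertices of `M`. -/
def IsModule (G : SimpleGraph V) (M : Set V) : Prop :=
  ∀ z ∉ M, ∀ a ∈ M, ∀ b ∈ M, G.Adj z a ↔ G.Adj z b

/-- Vertices with the same neighbours, except possibly each other: true or false twins. -/
def Twins (G : SimpleGraph V) (u v : V) : Prop :=
  u ≠ v ∧ ∀ z, z ≠ u → z ≠ v → (G.Adj z u ↔ G.Adj z v)

/-- The graph induced on `M` has no induced path with four vertices. The vertices `a`, `b`, `c`, `d`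
need not be assumed distinct, as one of the alternatives is immediate when two of them agree. -/
def P4FreeOn (G : SimpleGraph V) (M : Set V) : Prop :=
  ∀ a ∈ M, ∀ b ∈ M, ∀ c ∈ M, ∀ d ∈ M, G.Adj a b → G.Adj b c → G.Adj c d →
    G.Adj a c ∨ G.Adj b d ∨ G.Adj a d

/-- The graph induced on `M` is disconnected, as witnessed by a cut without crossing edges. -/
def DisconnectedOn (G : SimpleGraph V) (M : Set V) : Prop :=
  ∃ A ⊆ M, A.Nonempty ∧ (M \ A).Nonempty ∧ ∀ a ∈ A, ∀ b ∈ M \ A, ¬G.Adj a b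

section Modules

variable {M : Set V} {v : V}

theorem P4FreeOn.mono (hM : P4FreeOn G M) {L : Set V} (hL : L ⊆ M) : P4FreeOn G L :=
  fun a ha b hb c hc d hd => hM a (hL ha) b (hL hb) c (hL hc) d (hL hd)

theorem P4FreeOn.compl (hM : P4FreeOn G M) : P4FreeOn Gᶜ M := by
  intro a ha b hb c hc d hd hab hbc hcd
  have hpath := hM b hb d hd a ha c hc
  simp only [compl_adj] at *
  grind [G.adj_comm]

theorem isModule_compl : IsModule Gᶜ M ↔ IsModule G M := by
  refine forall₂_congr fun z hz => forall₂_congr fun a ha => forall₂_congr fun b hb => ?_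
  rw [compl_adj, compl_adj, and_iff_right (ne_of_mem_of_not_mem ha hz).symm,
    and_iff_right (ne_of_mem_of_not_mem hb hz).symm, not_iff_not]

theorem Twins.of_compl {u : V} (h : Twins Gᶜ u v) : Twins G u v := by
  refine h.imp_right fun h z hzu hzv => not_iff_not.1 ?_
  simpa only [compl_adj, ne_eq, hzu, hzv, not_false_eq_true, true_and] using h z hzu hzv

theorem DisconnectedOn.exists_mem (hM : DisconnectedOn G M) (hv : v ∈ M) :
    ∃ A ⊆ M, v ∈ A ∧ (M \ A).Nonempty ∧ ∀ a ∈ A, ∀ b ∈ M \ A, ¬G.Adj a b := by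
  obtain ⟨A, hAM, hA, hB, hAB⟩ := hM
  by_cases hvA : v ∈ A
  · exact ⟨A, hAM, hvA, hB, hAB⟩
  · refine ⟨M \ A, Set.sdiff_subset, ⟨hv, hvA⟩, ?_⟩
    rw [Set.sdiff_sdiff_cancel_left hAM]
    exact ⟨hA, fun b hb a ha hba => hAB a ha b hb hba.symm⟩

theorem disconnectedOn_insert_of_forall_not_adj (hM : M.Nonempty) (hvM : v ∉ M)
    (hv : ∀ x ∈ M, ¬G.Adj v x) : DisconnectedOn G (insert v M) := by
  refine ⟨{v}, by simp, by simp, ?_⟩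
  rw [Set.insert_sdiff_self_of_notMem hvM]
  exact ⟨hM, by simpa using hv⟩

theorem disconnectedOn_insert {A : Set V} (hA : A ⊆ M) (hvM : v ∉ M) (hB : (M \ A).Nonempty)
    (hcut : ∀ a ∈ A, ∀ b ∈ M \ A, ¬G.Adj a b) (hv : ∀ b ∈ M \ A, ¬G.Adj v b) :
    DisconnectedOn G (insert v M) := by
  refine ⟨insert v A, Set.insert_subset_insert hA, Set.insert_nonempty v A, ?_⟩
  rw [Set.insert_sdiff_of_mem _ (Set.mem_insert v A), Set.sdiff_insert_of_notMem hvM]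
  exact ⟨hB, Set.forall_mem_insert.2 ⟨hv, hcut⟩⟩

/-- If `v` is adjacent to some but not all vertices of one side of the cut, an edge `xy` between a
neighbour and a nonneighbour of `v` shows that `v` has no neighbour `w` on the other side:
otherwise `y`, `x`, `v`, `w` would induce a path. -/
theorem P4FreeOn.disconnectedOn_insert (hP : P4FreeOn G (insert v M)) (hvM : v ∉ M)
    (hM : DisconnectedOn G M) :
    DisconnectedOn G (insert v M) ∨ DisconnectedOn Gᶜ (insert v M) := by
  by_cases hall : ∀ y ∈ M, G.Adj v y
  · obtain ⟨A, hAM, hA, -⟩ := hM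
    exact .inr (disconnectedOn_insert_of_forall_not_adj (hA.mono hAM) hvM
      fun y hy h => ((compl_adj ..).1 h).2 (hall y hy))
  left
  by_cases hmixed : ∃ x ∈ M, ∃ y ∈ M, G.Adj v x ∧ ¬G.Adj v y ∧ G.Adj x y
  · obtain ⟨x, hx, y, hy, hvx, hvy, hxy⟩ := hmixed
    obtain ⟨A, hAM, hxA, hB, hcut⟩ := hM.exists_mem hx
    have hyA : y ∈ A := by_contra fun hyA => hcut x hxA y ⟨hy, hyA⟩ hxy
    refine _root_.disconnectedOn_insert hAM hvM hB hcut fun w hw hvw => ?_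
    rcases hP y (.inr hy) x (.inr hx) v (.inl rfl) w (.inr hw.1) hxy.symm hvx.symm hvw
      with h | h | h
    · exact hvy h.symm
    · exact hcut x hxA w hw h
    · exact hcut y hyA w hw h
  · push Not at hall hmixed
    refine _root_.disconnectedOn_insert (A := {x ∈ M | G.Adj v x}) (Set.sep_subset _ _) hvM
      (hall.imp fun y hy => ⟨hy.1, fun h => hy.2 h.2⟩) ?_ fun y hy hvy => hy.2 ⟨hy.1, hvy⟩
    exact fun x hx y hy => hmixed x hx.1 y hy.1 hx.2 fun hvy => hy.2 ⟨hy.1, hvy⟩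

/-- Seinsche's theorem. -/
theorem P4FreeOn.disconnectedOn_or_disconnectedOn_compl (hfin : M.Finite) :
    P4FreeOn G M → M.Nontrivial → DisconnectedOn G M ∨ DisconnectedOn Gᶜ M := by
  induction M, hfin using Set.Finite.induction_on with
  | empty => exact fun _ h => absurd h Set.not_nontrivial_empty
  | @insert v M hvM _ ih =>
    intro hP hM
    by_cases hM' : M.Nontrivial
    · rcases ih (hP.mono (Set.subset_insert v M)) hM' with h | h
      · exact hP.disconnectedOn_insert hvM h
      · simpa only [compl_compl, or_comm] using hP.compl.disconnectedOn_insert hvM h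
    · obtain ⟨w, hw, hwv⟩ := hM.exists_ne v
      have hwM : w ∈ M := hw.resolve_left hwv
      obtain rfl := (Set.not_nontrivial_iff.1 hM').eq_singleton_of_mem hwM
      by_cases hvw : G.Adj v w
      · exact .inr (disconnectedOn_insert_of_forall_not_adj ⟨w, rfl⟩ hvM
          (by simpa [compl_adj] using fun _ => hvw))
      · exact .inl (disconnectedOn_insert_of_forall_not_adj ⟨w, rfl⟩ hvM (by simpa using hvw))

theorem IsModule.of_cut (hM : IsModule G M) {A : Set V} (hA : A ⊆ M)
    (hcut : ∀ a ∈ A, ∀ b ∈ M \ A, ¬G.Adj a b) : IsModule G A := by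
  intro z hz a ha b hb
  by_cases hzM : z ∈ M
  · exact iff_of_false (fun h => hcut a ha z ⟨hzM, hz⟩ h.symm)
      fun h => hcut b hb z ⟨hzM, hz⟩ h.symm
  · exact hM z hzM a (hA ha) b (hA hb)

theorem exists_twins_of_minimal_module
    (hM : Minimal (fun L : Set V => L.Nontrivial ∧ IsModule G L) M) (hd : DisconnectedOn G M) :
    ∃ u v, Twins G u v := by
  have subsingleton_part : ∀ A ⊆ M, (M \ A).Nonempty → (∀ a ∈ A, ∀ b ∈ M \ A, ¬G.Adj a b) →
      A.Subsingleton := fun A hAM hB hcut => by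
    by_contra hA
    obtain ⟨b, hbM, hbA⟩ := hB
    exact hbA (hM.le_of_le ⟨Set.not_subsingleton_iff.1 hA, hM.prop.2.of_cut hAM hcut⟩ hAM hbM)
  obtain ⟨A, hAM, ⟨u, hu⟩, ⟨v, hv⟩, hcut⟩ := hd
  have hA := (subsingleton_part A hAM ⟨v, hv⟩ hcut).eq_singleton_of_mem hu
  have hB := (subsingleton_part (M \ A) Set.sdiff_subset
    (by rw [Set.sdiff_sdiff_cancel_left hAM]; exact ⟨u, hu⟩) (by
      rw [Set.sdiff_sdiff_cancel_left hAM]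
      exact fun b hb a ha h => hcut a ha b hb h.symm)).eq_singleton_of_mem hv
  refine ⟨u, v, fun h => hv.2 (h ▸ hu), fun z hzu hzv => hM.prop.2 z ?_ u (hAM hu) v hv.1⟩
  rw [← Set.union_sdiff_cancel hAM, hB, hA]
  simp [hzu, hzv]

theorem P4FreeOn.exists_twins [Finite V] (hP : P4FreeOn G M) (hM : M.Nontrivial)
    (hmod : IsModule G M) : ∃ u v, Twins G u v := by
  obtain ⟨L, hLM, hL⟩ := exists_minimal_le_of_wellFoundedLT
    (fun L : Set V => L.Nontrivial ∧ IsModule G L) M ⟨hM, hmod⟩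
  rcases (hP.mono hLM).disconnectedOn_or_disconnectedOn_compl L.toFinite hL.prop.1 with h | h
  · exact exists_twins_of_minimal_module hL h
  · obtain ⟨u, v, huv⟩ := exists_twins_of_minimal_module (by simpa only [isModule_compl]) h
    exact ⟨u, v, huv.of_compl⟩

end Modules

/-! ### Distance-hereditary graphs have pendant vertices or twins -/

namespace DistanceHereditary

theorem p4FreeOn_neighborSet (hG : DistanceHereditary G) (p : V) :
    P4FreeOn G (G.neighborSet p) := by
  intro a ha b _ c _ d hd hab hbc hcd
  by_contra! ⟨hac, hbd, had⟩
  have hbd' : b ≠ d := by rintro rfl; exact had hab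
  have had' : a ≠ d := by rintro rfl; exact hac hcd.symm
  refine hbd (hG.adj_of_walk (.cons hbc (.cons hcd .nil)) ha.symm hab hd.symm had' hbd' ?_).symm
  simp [hac, had]

variable {r v : V}

theorem adj_of_adj_of_dist_eq (hG : DistanceHereditary G) {x y p : V} (hr : G.Reachable p r)
    (hxy : G.Adj x y) (hxp : G.Adj x p) (hdist : G.dist x r = G.dist y r)
    (hp : G.dist p r + 1 = G.dist x r) : G.Adj y p := by
  by_contra hyp
  obtain ⟨q, hq⟩ := exists_walk_forall_dist_lt hr
  have hle := hG.dist_add_one_le_of_walk (.cons hxp q) hxy.symm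
    (by rintro rfl; rw [dist_self] at hdist; omega) fun w hw hyw => by
      rcases List.mem_cons.1 hw with h | hw
      · exact h
      · rcases hq w hw with rfl | hlt
        · exact absurd hyw hyp
        · have := dist_le_dist_add_one_of_adj_s14 hyw r
          omega
  omega

/-- The component of `x` in the subgraph induced on the last level is a module contained in the
neighbourhood of a vertex of the previous level. -/
theorem exists_twins_of_adj_farthest [Finite V] (hG : DistanceHereditary G) (hc : G.Connected)
    {x y : V} (hfar : ∀ z, G.dist z r ≤ G.dist x r) (hxy : G.Adj x y)
    (hdist : G.dist y r = G.dist x r) : ∃ u v, Twins G u v := by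
  let M : Set V := {z | Relation.ReflTransGen (fun a b => G.Adj a b ∧ G.dist b r = G.dist x r) x z}
  have dist_eq : ∀ z ∈ M, G.dist z r = G.dist x r := fun z hz => by
    cases hz with
    | refl => rfl
    | tail _ h => exact h.2
  have adj_lower : ∀ p, G.dist p r + 1 = G.dist x r → ∀ z ∈ M, (G.Adj x p ↔ G.Adj z p) := by
    intro p hp z hz
    induction hz with
    | refl => rfl
    | @tail b c hb hbc ih =>
      have hdb := dist_eq b hb
      exact ih.trans ⟨fun h => hG.adj_of_adj_of_dist_eq (hc p r) hbc.1 h (by omega) (by omega),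
        fun h => hG.adj_of_adj_of_dist_eq (hc p r) hbc.1.symm h (by omega) (by omega)⟩
  have hxr : x ≠ r := by
    rintro rfl
    exact hxy.ne (hc.dist_eq_zero_iff.1 (hdist.trans dist_self)).symm
  obtain ⟨p, hxp, hp⟩ := exists_adj_dist_add_one_eq (hc x r) hxr
  have hMp : M ⊆ G.neighborSet p := fun z hz => ((adj_lower p hp z hz).1 hxp).symm
  refine ((hG.p4FreeOn_neighborSet p).mono hMp).exists_twins
    ⟨x, .refl, y, .single ⟨hxy, hdist⟩, hxy.ne⟩ fun z hz => ?_
  have lower : ∀ a ∈ M, G.Adj a z → G.dist z r + 1 = G.dist x r := fun a ha haz => by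
    have hne : G.dist z r ≠ G.dist x r := fun h => hz (ha.tail ⟨haz, h⟩)
    have := dist_le_dist_add_one_of_adj_s14 haz r
    have := dist_eq a ha
    have := hfar z
    omega
  have adj_of_adj : ∀ a ∈ M, ∀ b ∈ M, G.Adj z a → G.Adj z b := fun a ha b hb hza => by
    have hz' := lower a ha hza.symm
    exact ((adj_lower z hz' b hb).1 ((adj_lower z hz' a ha).2 hza.symm)).symm
  exact fun a ha b hb => ⟨adj_of_adj a ha b hb, adj_of_adj b hb a ha⟩

section IndependentLastLevel

variable (hc : G.Connected) (hlevel : ∀ x a, G.dist x r = G.dist v r → G.Adj x a →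
  G.dist a r + 1 = G.dist v r)

include hc hlevel

theorem exists_walk_forall_not_adj (hfar : ∀ z, G.dist z r ≤ G.dist v r) {z : V}
    (hvz : ¬G.Adj v z) (hsub : G.dist z r = G.dist v r → ¬G.neighborSet z ⊆ G.neighborSet v) :
    ∃ p : G.Walk z r, ∀ w ∈ p.support, ¬G.Adj v w := by
  have descend : ∀ c, ¬G.Adj v c → G.dist c r < G.dist v r →
      ∃ p : G.Walk c r, ∀ w ∈ p.support, ¬G.Adj v w := fun c hvc hlt => by
    obtain ⟨p, hp⟩ := exists_walk_forall_dist_lt (hc c r)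
    refine ⟨p, fun w hw hvw => ?_⟩
    have := hlevel v w rfl hvw
    rcases hp w hw with rfl | h
    · exact hvc hvw
    · omega
  rcases (hfar z).lt_or_eq with hlt | heq
  · exact descend z hvz hlt
  · obtain ⟨c, hzc, hvc⟩ := Set.not_subset.1 (hsub heq)
    obtain ⟨p, hp⟩ := descend c hvc (by have := hlevel z c heq hzc; omega)
    exact ⟨.cons hzc p, List.forall_mem_cons.2 ⟨hvz, hp⟩⟩

theorem isModule_neighborSet (hG : DistanceHereditary G)
    (hfar : ∀ z, G.dist z r ≤ G.dist v r)
    (hmin : ∀ z, G.dist z r = G.dist v r → G.neighborSet z ⊆ G.neighborSet v →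
      G.neighborSet v ⊆ G.neighborSet z) : IsModule G (G.neighborSet v) := by
  suffices h : ∀ z, ¬G.Adj v z → ∀ a, G.Adj v a → ∀ b, G.Adj v b → G.Adj z a → G.Adj z b from
    fun z hz a ha b hb => ⟨h z hz a ha b hb, h z hz b hb a ha⟩
  intro z hvz a hva b hvb hza
  by_contra hzb
  have hne : v ≠ z := by rintro rfl; exact hzb hvb
  have hbz : b ≠ z := by rintro rfl; exact hvz hvb
  obtain ⟨q, hq⟩ := exists_walk_forall_not_adj hc hlevel hfar hvz fun hz hsub =>
    hzb (hmin z hz hsub hvb)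
  obtain ⟨p, hp⟩ := exists_walk_forall_dist_lt (hc b r)
  refine hzb (hG.adj_of_walk (p.append q.reverse) hva hvb hza hne hbz fun w hw hvw => ?_)
  rcases (Walk.mem_support_append_iff ..).1 hw with hw | hw
  · have := hlevel v w rfl hvw
    have := hlevel v b rfl hvb
    exact (hp w hw).resolve_right (by omega)
  · exact absurd hvw (hq w (by simpa using hw))

end IndependentLastLevel

/-- Bandelt and Mulder's theorem. If the last level with respect to a vertex `r` contains an edge,
one of its components contains twins; otherwise a vertex of the last level with minimal
neighbourhood is pendant or has twins in its neighbourhood. -/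
theorem exists_pendant_or_twins [Finite V] [Nontrivial V] (hG : DistanceHereditary G)
    (hc : G.Connected) : ∃ u v, G.neighborSet v = {u} ∨ Twins G u v := by
  obtain ⟨r, r', hr⟩ := exists_pair_ne V
  obtain ⟨x, hx⟩ := Finite.exists_max (G.dist · r)
  have hpos : 0 < G.dist x r := (hc.pos_dist_of_ne hr.symm).trans_le (hx r')
  by_cases hedge : ∃ y z, G.Adj y z ∧ G.dist y r = G.dist x r ∧ G.dist z r = G.dist x r
  · obtain ⟨y, z, hyz, hy, hz⟩ := hedge
    obtain ⟨u, v, huv⟩ := hG.exists_twins_of_adj_farthest hc (hy ▸ hx) hyz (hz.trans hy.symm)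
    exact ⟨u, v, .inr huv⟩
  obtain ⟨v, hv, hmin⟩ := Set.Finite.exists_minimalFor G.neighborSet
    {z | G.dist z r = G.dist x r} (Set.toFinite _) ⟨x, rfl⟩
  replace hv : G.dist v r = G.dist x r := hv
  simp only [← hv] at hx hpos hedge hmin
  have hlevel : ∀ z a, G.dist z r = G.dist v r → G.Adj z a → G.dist a r + 1 = G.dist v r := by
    intro z a hz hza
    have hne : G.dist a r ≠ G.dist v r := fun ha => hedge ⟨z, a, hza, hz, ha⟩
    have := dist_le_dist_add_one_of_adj_s14 hza r
    have := hx a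
    omega
  rcases (G.neighborSet v).subsingleton_or_nontrivial with hsub | hnon
  · obtain ⟨p, hp, -⟩ := exists_adj_dist_add_one_eq (hc v r) fun h => by simp [h] at hpos
    exact ⟨p, v, .inl (hsub.eq_singleton_of_mem hp)⟩
  · obtain ⟨u, w, huw⟩ := (hG.p4FreeOn_neighborSet v).exists_twins hnon
      (isModule_neighborSet hc hlevel hG hx fun z hz => hmin hz)
    exact ⟨u, w, .inr huw⟩

end DistanceHereditary

/-- The graphs obtained from a single vertex by adding pendant vertices and twins, up to
isomorphism. False twins of isolated vertices are excluded, as they disconnect the graph. -/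
inductive Constructible : ∀ {V : Type u}, SimpleGraph V → Prop
  | single {V : Type u} [Nonempty V] [Subsingleton V] (G : SimpleGraph V) : Constructible G
  | pendant {V : Type u} {G : SimpleGraph V} (h : Constructible G) (u : V) :
      Constructible (pendant G u)
  | trueTwin {V : Type u} {G : SimpleGraph V} (h : Constructible G) (u : V) :
      Constructible (trueTwin G u)
  | falseTwin {V : Type u} {G : SimpleGraph V} (h : Constructible G) {u : V}
      (hu : (G.neighborSet u).Nonempty) : Constructible (falseTwin G u)
  | of_iso {V V' : Type u} {G : SimpleGraph V} {G' : SimpleGraph V'} (h : Constructible G)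
      (e : G ≃g G') : Constructible G'

/-- A graph is recovered from any of its vertices `v` and the graph induced on the others; the new
vertex `none` is sent to `v`. -/
def addVertexInduceIso [DecidableEq V] {v : V} {N : Set {w // w ≠ v}}
    (hN : ∀ w, w ∈ N ↔ G.Adj v w) : addVertex (G.induce {w | w ≠ v}) N ≃g G where
  toEquiv := Equiv.optionSubtypeNe v
  map_rel_iff' := by
    rintro (_ | x) (_ | y)
    · exact iff_of_false (SimpleGraph.irrefl _) (SimpleGraph.irrefl _)
    · exact (hN y).symm
    · exact (G.adj_comm ..).trans (hN x).symm
    · exact Iff.rfl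

theorem connected_induce_ne {u v : V} (hc : G.Connected) (huv : u ≠ v)
    (hu : ∀ w, G.Adj v w → w = u ∨ G.Adj u w) : (G.induce {w | w ≠ v}).Connected := by
  classical
  have hret := isContraction_getD (H := G.induce {w | w ≠ v}) (N := {w | G.Adj v w}) (z := ⟨u, huv⟩)
    fun w hw => (hu w hw).imp_left Subtype.ext
  have hconn := (addVertexInduceIso (G := G) (v := v) fun _ => Iff.rfl).connected_iff.2 hc
  exact hret.connected (fun w => ⟨some w, rfl⟩) hconn

namespace Constructible

variable {V : Type u} {G : SimpleGraph V} {u v : V}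

theorem of_neighborSet_eq_singleton (h : Constructible (G.induce {w | w ≠ v}))
    (hv : G.neighborSet v = {u}) : Constructible G := by
  classical
  have hvu : ∀ w, G.Adj v w ↔ w = u := Set.ext_iff.1 hv
  let u' : {w // w ≠ v} := ⟨u, ((hvu u).2 rfl).ne'⟩
  exact .of_iso (h.pendant u') (addVertexInduceIso fun w => Subtype.ext_iff.trans (hvu w).symm)

theorem of_twins (h : Constructible (G.induce {w | w ≠ v})) (huv : Twins G u v)
    (hv : (G.neighborSet v).Nonempty) : Constructible G := by
  classical
  let u' : {w // w ≠ v} := ⟨u, huv.1⟩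
  have adj_iff : ∀ w : {w // w ≠ v}, w ≠ u' → (G.Adj u w ↔ G.Adj v w) := fun w hwu => by
    rw [G.adj_comm u, G.adj_comm v, huv.2 w (fun h => hwu (Subtype.ext h)) w.2]
  by_cases hadj : G.Adj v u
  · refine .of_iso (h.trueTwin u') (addVertexInduceIso fun w => ?_)
    rcases eq_or_ne w u' with rfl | hwu
    · exact iff_of_true (.inl rfl) hadj
    · exact (or_iff_right hwu).trans (adj_iff w hwu)
  · have hN : ∀ w, w ∈ (G.induce {w | w ≠ v}).neighborSet u' ↔ G.Adj v w := fun w => by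
      rcases eq_or_ne w u' with rfl | hwu
      · exact iff_of_false (SimpleGraph.irrefl _) hadj
      · exact adj_iff w hwu
    obtain ⟨a, ha⟩ := hv
    exact .of_iso (h.falseTwin ⟨⟨a, ha.ne'⟩, (hN _).2 ha⟩) (addVertexInduceIso hN)

end Constructible

theorem DistanceHereditary.constructible {V : Type u} [Finite V] {G : SimpleGraph V}
    (hG : DistanceHereditary G) (hc : G.Connected) : Constructible G := by
  induction hn : Nat.card V using Nat.strong_induction_on generalizing V with
  | _ n ih =>
  have := hc.nonempty
  rcases subsingleton_or_nontrivial V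
  · exact .single G
  have constructible_induce : ∀ {u v : V}, u ≠ v → (∀ w, G.Adj v w → w = u ∨ G.Adj u w) →
      Constructible (G.induce {w | w ≠ v}) := fun {u v} huv hu =>
    ih _ (hn ▸ Finite.card_subtype_lt (not_not.2 (Eq.refl v)))
      (hG.of_embedding (Embedding.induce _)) (connected_induce_ne hc huv hu) rfl
  obtain ⟨u, v, hv | huv⟩ := hG.exists_pendant_or_twins hc
  · have hvu : ∀ w, G.Adj v w ↔ w = u := Set.ext_iff.1 hv
    exact .of_neighborSet_eq_singleton (constructible_induce ((hvu u).2 rfl).ne'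
      fun w hw => .inl ((hvu w).1 hw)) hv
  · refine .of_twins (constructible_induce huv.1 fun w hw => or_iff_not_imp_left.2 fun hwu => ?_)
      huv (hc.preconnected.exists_adj_of_nontrivial v)
    exact ((huv.2 w hwu hw.ne').2 hw.symm).symm

/-! ### Degrees and edges after adding a vertex -/

section Counting

variable {N : Set W} {x z : W}

theorem neighborSet_addVertex_none : (addVertex H N).neighborSet none = some '' N := by
  ext (_ | b) <;> simp

theorem neighborSet_addVertex_of_mem (hx : x ∈ N) :
    (addVertex H N).neighborSet (some x) = insert none (some '' H.neighborSet x) := by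
  ext (_ | b) <;> simp [hx]

theorem neighborSet_addVertex_of_notMem (hx : x ∉ N) :
    (addVertex H N).neighborSet (some x) = some '' H.neighborSet x := by
  ext (_ | b) <;> simp [hx]

theorem edgeSet_addVertex : (addVertex H N).edgeSet =
    Sym2.map some '' H.edgeSet ∪ (fun x => s(none, some x)) '' N := by
  ext e
  induction e with | _ x y =>
  rcases x with _ | x <;> rcases y with _ | y
  · simp [Sym2.exists]
  · simp [Sym2.exists]
  · simp [Sym2.exists]
  · suffices H.Adj x y ↔ ∃ a b, H.Adj a b ∧ (a = x ∧ b = y ∨ a = y ∧ b = x) by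
      simpa [Sym2.exists]
    grind [H.adj_comm]

theorem ncard_neighborSet_addVertex_none :
    ((addVertex H N).neighborSet none).ncard = N.ncard := by
  rw [neighborSet_addVertex_none, Set.ncard_image_of_injective N (Option.some_injective W)]

theorem ncard_neighborSet_addVertex_of_notMem (hx : x ∉ N) :
    ((addVertex H N).neighborSet (some x)).ncard = (H.neighborSet x).ncard := by
  rw [neighborSet_addVertex_of_notMem hx, Set.ncard_image_of_injective _ (Option.some_injective W)]

theorem ncard_neighborSet_addVertex_of_mem [Finite W] (hx : x ∈ N) :
    ((addVertex H N).neighborSet (some x)).ncard = (H.neighborSet x).ncard + 1 := by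
  rw [neighborSet_addVertex_of_mem hx, Set.ncard_insert_of_notMem (by simp),
    Set.ncard_image_of_injective _ (Option.some_injective W)]

theorem ncard_edgeSet_addVertex [Finite W] :
    (addVertex H N).edgeSet.ncard = H.edgeSet.ncard + N.ncard := by
  have hinj : (fun x : W => s(none, some x)).Injective := fun x y h => by simpa using h
  rw [edgeSet_addVertex, Set.ncard_union_eq, Set.ncard_image_of_injective _ hinj,
    Set.ncard_image_of_injective _ (Sym2.map.injective (Option.some_injective W))]
  rw [Set.disjoint_left]
  rintro _ ⟨e, -, rfl⟩ ⟨x, -, hx⟩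
  induction e with | _ a b => simp at hx

theorem ncard_edgeSet_of_iso (e : G ≃g H) : H.edgeSet.ncard = G.edgeSet.ncard :=
  (Nat.card_congr e.mapEdgeSet).symm

theorem ncard_insert_neighborSet [Finite W] (x : W) :
    (insert x (H.neighborSet x)).ncard = (H.neighborSet x).ncard + 1 :=
  Set.ncard_insert_of_notMem (SimpleGraph.irrefl H)

theorem ncard_neighborSet_trueTwin [Finite W] (x : W) :
    ((trueTwin H x).neighborSet (some x)).ncard = (H.neighborSet x).ncard + 1 :=
  ncard_neighborSet_addVertex_of_mem (.inl rfl)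

theorem IsUniversal.isDominated_none (hz : IsUniversal H N z) :
    IsDominated (addVertex H N) none := by
  refine ⟨some z, hz.1, ?_⟩
  rintro (_ | b) hb
  · exact False.elim hb
  · exact (hz.2 b hb).imp_left (congrArg some)

theorem IsUniversal.addVertex (hz : IsUniversal H (H.neighborSet x) z) (hN : x ∈ N → z ∈ N) :
    IsUniversal (addVertex H N) ((addVertex H N).neighborSet (some x)) (some z) := by
  refine ⟨hz.1, ?_⟩
  rintro (_ | b) hb
  · exact .inr (hN hb)
  · exact (hz.2 b hb).imp_left (congrArg some)

theorem isUniversal_trueTwin (x : W) :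
    IsUniversal (trueTwin H x) ((trueTwin H x).neighborSet (some x)) none := by
  refine ⟨.inl rfl, ?_⟩
  rintro (_ | b) hb
  · exact .inl rfl
  · exact .inr (.inr hb)

theorem IsDominated.falseTwin_trueTwin {y : W} (hx : IsDominated H x) (hxy : H.Adj y x) :
    IsDominated (falseTwin (trueTwin H y) (some y)) (some (some x)) := by
  obtain ⟨z, hz⟩ := hx
  rcases hz.2 y hxy.symm with rfl | hzy
  · have hshadow : IsUniversal (trueTwin H y) ((trueTwin H y).neighborSet (some x)) none :=
      ⟨.inr hxy, by
        rintro (_ | b) hb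
        · exact .inl rfl
        · exact .inr (hz.2 b hb)⟩
    exact ⟨some none, hshadow.addVertex fun _ => .inl rfl⟩
  · exact ⟨some (some z), (hz.addVertex fun _ => .inr hzy.symm).addVertex fun _ => hzy.symm⟩

end Counting

/-! ### Linear hellifications -/

/-- The bound on the degree of `x` in the hull in terms of the degree `d` of the vertex of the
original graph that `x` represents. It is sharper for undominated vertices, because adding a false
twin of one of these costs two new vertices. Since the subtraction is truncated, it forces `x` to be
isolated if `d = 0`. -/
def HasDegreeBound (H : SimpleGraph W) (x : W) (d : ℕ) : Prop :=
  (H.neighborSet x).ncard ≤ 2 * d ∧ (¬IsDominated H x → (H.neighborSet x).ncard ≤ 2 * d - 1)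

theorem IsDominated.hasDegreeBound {x : W} (hx : IsDominated H x) {d : ℕ}
    (h : (H.neighborSet x).ncard ≤ 2 * d) : HasDegreeBound H x d :=
  ⟨h, fun hx' => absurd hx hx'⟩

namespace HasDegreeBound

variable {N : Set W} {x y : W} {d : ℕ}

theorem addVertex_of_notMem (h : HasDegreeBound H x d) (hx : x ∉ N) :
    HasDegreeBound (addVertex H N) (some x) d := by
  rw [HasDegreeBound, ncard_neighborSet_addVertex_of_notMem hx]
  exact h.imp_right fun h hdom => h fun ⟨z, hz⟩ => hdom ⟨some z, hz.addVertex fun h => absurd h hx⟩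

theorem addVertex_of_mem [Finite W] (h : HasDegreeBound H x d) (hx : x ∈ N) :
    HasDegreeBound (addVertex H N) (some x) (d + 1) := by
  have := h.1
  rw [HasDegreeBound, ncard_neighborSet_addVertex_of_mem hx]
  exact ⟨by omega, fun _ => by omega⟩

theorem falseTwin_trueTwin_of_adj [Finite W] (h : HasDegreeBound H x d) (hxy : H.Adj y x) :
    HasDegreeBound (falseTwin (trueTwin H y) (some y)) (some (some x)) (d + 1) := by
  have hcard : ((falseTwin (trueTwin H y) (some y)).neighborSet (some (some x))).ncard =
      (H.neighborSet x).ncard + 1 + 1 := by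
    rw [falseTwin, ncard_neighborSet_addVertex_of_mem (by exact hxy), trueTwin,
      ncard_neighborSet_addVertex_of_mem (.inr hxy)]
  rw [HasDegreeBound, hcard]
  have hpos : 0 < (H.neighborSet x).ncard := (Set.ncard_pos (Set.toFinite _)).2 ⟨y, hxy.symm⟩
  obtain ⟨hle, hsharp⟩ := h
  refine ⟨?_, fun hdom => ?_⟩
  · omega
  · have := hsharp fun hx => hdom (hx.falseTwin_trueTwin hxy)
    omega

theorem falseTwin_trueTwin_of_not_adj (h : HasDegreeBound H x d) (hne : x ≠ y)
    (hxy : ¬H.Adj y x) : HasDegreeBound (falseTwin (trueTwin H y) (some y)) (some (some x)) d :=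
  (h.addVertex_of_notMem (not_or.2 ⟨hne, hxy⟩)).addVertex_of_notMem hxy

theorem falseTwin_trueTwin_self [Finite W] (h : (H.neighborSet x).ncard + 1 ≤ 2 * d) :
    HasDegreeBound (falseTwin (trueTwin H x) (some x)) (some (some x)) d := by
  rw [← ncard_neighborSet_trueTwin] at h
  have hdom : IsDominated (trueTwin H x) (some x) := ⟨none, isUniversal_trueTwin x⟩
  exact (hdom.hasDegreeBound h).addVertex_of_notMem (SimpleGraph.irrefl _)

theorem falseTwin_trueTwin_none [Finite W] (h : (H.neighborSet x).ncard + 1 ≤ 2 * d) :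
    HasDegreeBound (falseTwin (trueTwin H x) (some x)) none d := by
  refine (isUniversal_trueTwin x).isDominated_none.hasDegreeBound ?_
  rwa [ncard_neighborSet_addVertex_none, ncard_neighborSet_trueTwin]

end HasDegreeBound

/-- Extension of an embedding by a new vertex on either side. -/
def extendEmbedding (φ : G ↪g H) {N : Set V} {N' : Set W} (hN : ∀ a, φ a ∈ N' ↔ a ∈ N) :
    addVertex G N ↪g addVertex H N' where
  toEmbedding := φ.toEmbedding.optionMap
  map_rel_iff' := by
    rintro (_ | a) (_ | b)
    · exact Iff.rfl
    · exact hN b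
    · exact hN a
    · exact φ.map_adj_iff

/-- An embedding `φ` of `G` into a distance-hereditary Helly graph `H` of linear size; `φ` is
isometric if `G` is connected, as `H` is distance-hereditary. The bounds on degrees make it possible
to extend the embedding when a vertex is added to `G`. -/
structure LinearHellification (G : SimpleGraph V) (H : SimpleGraph W) (φ : G ↪g H) : Prop where
  connected : H.Connected
  helly : HellyGraph H
  distanceHereditary : DistanceHereditary H
  card_le : Nat.card W ≤ 2 * Nat.card V
  ncard_edgeSet_le : H.edgeSet.ncard ≤ 4 * G.edgeSet.ncard
  hasDegreeBound : ∀ a, HasDegreeBound H (φ a) (G.neighborSet a).ncard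

namespace LinearHellification

variable {φ : G ↪g H}

theorem of_iso {V' : Type*} {G' : SimpleGraph V'} (h : LinearHellification G H φ) (e : G ≃g G') :
    LinearHellification G' H (φ.comp e.symm.toEmbedding) where
  connected := h.connected
  helly := h.helly
  distanceHereditary := h.distanceHereditary
  card_le := Nat.card_congr e.toEquiv ▸ h.card_le
  ncard_edgeSet_le := ncard_edgeSet_of_iso e ▸ h.ncard_edgeSet_le
  hasDegreeBound a := by
    have hcard : (G'.neighborSet a).ncard = (G.neighborSet (e.symm a)).ncard :=
      Nat.card_congr (e.symm.mapNeighborSet a)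
    exact hcard ▸ h.hasDegreeBound (e.symm a)

theorem single [Nonempty V] [Subsingleton V] (G : SimpleGraph V) :
    LinearHellification G G (Embedding.refl) where
  connected := .of_subsingleton
  helly _ _ _ := ⟨Classical.arbitrary V, fun v _ => by
    rw [Subsingleton.elim v (Classical.arbitrary V), dist_self]; exact Nat.zero_le _⟩
  distanceHereditary _ _ a b := by rw [Subsingleton.elim a b, dist_self, dist_self]
  card_le := by omega
  ncard_edgeSet_le := by omega
  hasDegreeBound a := by simp [HasDegreeBound]

variable [Finite V] [Finite W]

theorem addVertex (h : LinearHellification G H φ) {N : Set V} {N' : Set W} {z : W}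
    (hN : ∀ a, φ a ∈ N' ↔ a ∈ N) (hz : IsUniversal H N' z) (hhelly : HellyGraph (addVertex H N'))
    (hDH : DistanceHereditary (addVertex H N')) (hcard : N'.ncard ≤ 2 * N.ncard) :
    LinearHellification (addVertex G N) (addVertex H N') (extendEmbedding φ hN) where
  connected := connected_addVertex h.connected ⟨z, hz.1⟩
  helly := hhelly
  distanceHereditary := hDH
  card_le := by
    have := h.card_le
    rw [Finite.card_option, Finite.card_option]
    omega
  ncard_edgeSet_le := by
    have := h.ncard_edgeSet_le
    rw [ncard_edgeSet_addVertex, ncard_edgeSet_addVertex]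
    omega
  hasDegreeBound
    | none => hz.isDominated_none.hasDegreeBound <| by
        rwa [ncard_neighborSet_addVertex_none, ncard_neighborSet_addVertex_none]
    | some a => by
        by_cases ha : a ∈ N
        · rw [ncard_neighborSet_addVertex_of_mem ha]
          exact (h.hasDegreeBound a).addVertex_of_mem ((hN a).2 ha)
        · rw [ncard_neighborSet_addVertex_of_notMem ha]
          exact (h.hasDegreeBound a).addVertex_of_notMem (mt (hN a).1 ha)

theorem exists_pendant (h : LinearHellification G H φ) (u : V) :
    ∃ ψ, LinearHellification (pendant G u) (pendant H (φ u)) ψ :=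
  ⟨_, h.addVertex (N := {u}) (N' := {φ u}) (fun _ => φ.injective.eq_iff)
    (isUniversal_singleton (φ u)) (h.helly.pendant h.connected _)
    (h.distanceHereditary.pendant h.connected _) (by simp)⟩

theorem exists_trueTwin (h : LinearHellification G H φ) (u : V) :
    ∃ ψ, LinearHellification (trueTwin G u) (trueTwin H (φ u)) ψ := by
  refine ⟨_, h.addVertex (fun a => or_congr φ.injective.eq_iff φ.map_adj_iff)
    (isUniversal_insert_neighborSet (φ u)) (h.helly.trueTwin h.connected _)
    (h.distanceHereditary.trueTwin _) ?_⟩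
  have := (h.hasDegreeBound u).1
  rw [ncard_insert_neighborSet, ncard_insert_neighborSet]
  omega

theorem exists_falseTwin_of_isDominated (h : LinearHellification G H φ) {u : V}
    (hu : IsDominated H (φ u)) :
    ∃ ψ, LinearHellification (falseTwin G u) (falseTwin H (φ u)) ψ :=
  have ⟨_, hz⟩ := hu
  ⟨_, h.addVertex (fun _ => φ.map_adj_iff) hz (h.helly.falseTwin h.connected hu)
    (h.distanceHereditary.falseTwin _) (h.hasDegreeBound u).1⟩

theorem hasDegreeBound_falseTwin_trueTwin (h : LinearHellification G H φ) {u : V}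
    (hu : ¬IsDominated H (φ u)) (hne : (G.neighborSet u).Nonempty) (x : Option V) :
    HasDegreeBound (falseTwin (trueTwin H (φ u)) (some (φ u))) (x.map fun a => some (φ a))
      ((falseTwin G u).neighborSet x).ncard := by
  have hu' := (h.hasDegreeBound u).2 hu
  have hpos : 0 < (G.neighborSet u).ncard := (Set.ncard_pos (Set.toFinite _)).2 hne
  rcases x with _ | a
  · have hcard : ((falseTwin G u).neighborSet none).ncard = (G.neighborSet u).ncard :=
      ncard_neighborSet_addVertex_none
    exact hcard ▸ .falseTwin_trueTwin_none (by omega)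
  by_cases hua : G.Adj u a
  · have hcard : ((falseTwin G u).neighborSet (some a)).ncard = (G.neighborSet a).ncard + 1 :=
      ncard_neighborSet_addVertex_of_mem hua
    exact hcard ▸ (h.hasDegreeBound a).falseTwin_trueTwin_of_adj (φ.map_adj_iff.2 hua)
  have hcard : ((falseTwin G u).neighborSet (some a)).ncard = (G.neighborSet a).ncard :=
    ncard_neighborSet_addVertex_of_notMem hua
  rw [hcard]
  obtain rfl | hau := eq_or_ne a u
  · exact .falseTwin_trueTwin_self (by omega)
  · exact (h.hasDegreeBound a).falseTwin_trueTwin_of_not_adj (φ.injective.ne hau)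
      (mt φ.map_adj_iff.1 hua)

/-- The shadow of `φ u`, a true twin of it, dominates both `φ u` and its new false twin. -/
theorem exists_falseTwin_of_not_isDominated (h : LinearHellification G H φ) {u : V}
    (hu : ¬IsDominated H (φ u)) (hne : (G.neighborSet u).Nonempty) :
    ∃ ψ, LinearHellification (falseTwin G u) (falseTwin (trueTwin H (φ u)) (some (φ u))) ψ := by
  have hdeg := (h.hasDegreeBound u).2 hu
  have hpos : 0 < (G.neighborSet u).ncard := (Set.ncard_pos (Set.toFinite _)).2 hne
  have hconn := connected_addVertex h.connected (Set.insert_nonempty (φ u) (H.neighborSet (φ u)))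
  have hshadow := isUniversal_trueTwin (H := H) (φ u)
  let incl : H ↪g trueTwin H (φ u) := ⟨.some, Iff.rfl⟩
  refine ⟨extendEmbedding (φ.trans incl) fun _ => φ.map_adj_iff,
    connected_addVertex hconn ⟨none, hshadow.1⟩,
    (h.helly.trueTwin h.connected _).falseTwin hconn ⟨none, hshadow⟩,
    (h.distanceHereditary.trueTwin _).falseTwin _, ?_, ?_,
    h.hasDegreeBound_falseTwin_trueTwin hu hne⟩
  · have := h.card_le
    rw [Finite.card_option, Finite.card_option, Finite.card_option]
    omega
  · have := h.ncard_edgeSet_le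
    rw [falseTwin, ncard_edgeSet_addVertex, ncard_neighborSet_trueTwin, trueTwin,
      ncard_edgeSet_addVertex, ncard_insert_neighborSet, falseTwin, ncard_edgeSet_addVertex]
    omega

end LinearHellification

theorem Constructible.exists_linearHellification {V : Type u} {G : SimpleGraph V}
    (hG : Constructible G) : ∃ (W : Type u) (_ : Finite W) (H : SimpleGraph W) (φ : G ↪g H),
      LinearHellification G H φ := by
  induction hG with
  | single G => exact ⟨_, inferInstance, G, _, .single G⟩
  | pendant _ u ih =>
    obtain ⟨W, _, H, φ, h⟩ := ih
    have := Finite.of_injective φ φ.injective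
    exact ⟨_, inferInstance, _, h.exists_pendant u⟩
  | trueTwin _ u ih =>
    obtain ⟨W, _, H, φ, h⟩ := ih
    have := Finite.of_injective φ φ.injective
    exact ⟨_, inferInstance, _, h.exists_trueTwin u⟩
  | @falseTwin _ _ _ u hu ih =>
    obtain ⟨W, _, H, φ, h⟩ := ih
    have := Finite.of_injective φ φ.injective
    by_cases hdom : IsDominated H (φ u)
    · exact ⟨_, inferInstance, _, h.exists_falseTwin_of_isDominated hdom⟩
    · exact ⟨_, inferInstance, _, h.exists_falseTwin_of_not_isDominated hdom hu⟩
  | of_iso _ e ih =>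
    obtain ⟨W, hW, H, φ, h⟩ := ih
    exact ⟨W, hW, H, _, h.of_iso e⟩

/-- Every distance-hereditary graph `G` embeds isometrically into a distance-hereditary
Helly graph with at most `2|V(G)|` vertices and at most `4|E(G)|` edges. -/
theorem distanceHereditary_hellification_linear_size
    {V : Type*} [Fintype V] (G : SimpleGraph V) (hconn : G.Connected)
    (hDH : DistanceHereditary G) :
    ∃ (n : ℕ) (H : SimpleGraph (Fin n)),
      n ≤ 2 * Fintype.card V ∧
      H.edgeSet.ncard ≤ 4 * G.edgeSet.ncard ∧
      H.Connected ∧ HellyGraph H ∧ DistanceHereditary H ∧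
      ∃ φ : V → Fin n, Function.Injective φ ∧
        (∀ a b : V, G.Adj a b → H.Adj (φ a) (φ b)) ∧
        (∀ a b : V, G.dist a b = H.dist (φ a) (φ b)) := by
  obtain ⟨W, _, H, φ, h⟩ := (hDH.constructible hconn).exists_linearHellification
  let e : H ≃g H.map (Finite.equivFin W).toEmbedding := Iso.map (Finite.equivFin W) H
  have hDH' := h.distanceHereditary.of_embedding e.symm.toEmbedding
  refine ⟨Nat.card W, _, Nat.card_eq_fintype_card (α := V) ▸ h.card_le,
    ncard_edgeSet_of_iso e ▸ h.ncard_edgeSet_le, e.connected_iff.1 h.connected,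
    h.helly.of_iso e, hDH', e ∘ φ, e.injective.comp φ.injective,
    fun a b hab => e.map_adj_iff.2 (φ.map_adj_iff.2 hab),
    fun a b => (hDH'.dist_map_embedding hconn (e.toEmbedding.comp φ) a b).symm⟩
end
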